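/- Let (S,d) be a Busemann surface and let Q ⊆ S be any finite set of points (not necessarily in general position). Then the finite metric space (Q,d) is l1-embeddable: there exist N and a map φ : Q → ℝᴺ such that Σᵢ |φ(x)ᵢ − φ(y)ᵢ| = d(x,y) for all x, y ∈ Q. -/

import Mathlib

open Metric Set MeasureTheory

/-- `γ` is a geodesic on the interval `[a, b]`. -/
def IsGeodesicOn {S : Type*} [MetricSpace S] (γ : ℝ → S) (a b : ℝ) : Prop :=
  ∀ s ∈ Set.Icc a b, ∀ t ∈ Set.Icc a b, dist (γ s) (γ t) = |s - t|

/-- `γ` is a geodesic from `x` to `y`. -/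
def IsGeodesicFromTo {S : Type*} [MetricSpace S] (γ : ℝ → S) (x y : S) : Prop :=
  IsGeodesicOn γ 0 (dist x y) ∧ γ 0 = x ∧ γ (dist x y) = y

/-- A geodesic metric space: every pair of points is joined by a geodesic. -/
def IsGeodesicMetricSpace (S : Type*) [MetricSpace S] : Prop :=
  ∀ x y : S, ∃ γ : ℝ → S, IsGeodesicFromTo γ x y

/-- A Busemann space: a geodesic metric space in which the distance function between
any two geodesics is convex. -/
def IsBusemannSpace (S : Type*) [MetricSpace S] : Prop :=
  IsGeodesicMetricSpace S ∧
    ∀ (γ γ' : ℝ → S) (a b a' b' : ℝ), a ≤ b → a' ≤ b' →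
      IsGeodesicOn γ a b → IsGeodesicOn γ' a' b' →
      ConvexOn ℝ (Set.Icc (0 : ℝ) 1)
        (fun t => dist (γ ((1 - t) * a + t * b)) (γ' ((1 - t) * a' + t * b')))

/-- A Busemann surface: a Busemann space homeomorphic to the plane `ℝ²`. -/
def IsBusemannSurface (S : Type*) [MetricSpace S] : Prop :=
  IsBusemannSpace S ∧ Nonempty (S ≃ₜ (ℝ × ℝ))

/-- `G` is the image of a geodesic from `x` to `y`. -/
def IsGeodesicSegment {S : Type*} [MetricSpace S] (x y : S) (G : Set S) : Prop :=
  ∃ γ : ℝ → S, IsGeodesicFromTo γ x y ∧ G = γ '' Set.Icc 0 (dist x y)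

/-- Convexity of a set with respect to a geodesic-segment assignment `seg`. -/
def SegConvex {S : Type*} (seg : S → S → Set S) (R : Set S) : Prop :=
  ∀ p ∈ R, ∀ q ∈ R, seg p q ⊆ R

/-- The convex hull: the smallest `seg`-convex set containing `Q`. -/
def segConvexHull {S : Type*} (seg : S → S → Set S) (Q : Set S) : Set S :=
  ⋂₀ {R : Set S | SegConvex seg R ∧ Q ⊆ R}

/-- A line of `S`: the image of an isometric embedding of `ℝ` into `S`. -/
def IsLineSet {S : Type*} [MetricSpace S] (L : Set S) : Prop :=
  ∃ ℓ : ℝ → S, Isometry ℓ ∧ L = Set.range ℓ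

/-- An open halfplane determined by a line `L`: a connected component of `S \ L`. -/
def IsOpenHalfplane {S : Type*} [MetricSpace S] (L H : Set S) : Prop :=
  ∃ x, x ∉ L ∧ H = connectedComponentIn Lᶜ x

/-- A closed halfplane determined by a line `L`: an open halfplane together with `L`. -/
def IsClosedHalfplane {S : Type*} [MetricSpace S] (L H : Set S) : Prop :=
  ∃ H', IsOpenHalfplane L H' ∧ H = H' ∪ L

/-- `X` and `Y` are line-separable: they lie in different open halfplanes of some line. -/
def LineSeparable {S : Type*} [MetricSpace S] (X Y : Set S) : Prop :=
  ∃ L H₁ H₂ : Set S, IsLineSet L ∧ IsOpenHalfplane L H₁ ∧ IsOpenHalfplane L H₂ ∧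
    H₁ ≠ H₂ ∧ X ⊆ H₁ ∧ Y ⊆ H₂

/-- `X` and `Y` are weakly line-separable: they lie in different closed halfplanes of
some line. -/
def WeaklyLineSeparable {S : Type*} [MetricSpace S] (X Y : Set S) : Prop :=
  ∃ L H₁ H₂ : Set S, IsLineSet L ∧ IsClosedHalfplane L H₁ ∧ IsClosedHalfplane L H₂ ∧
    H₁ ≠ H₂ ∧ X ⊆ H₁ ∧ Y ⊆ H₂

/-- `Q` is in general position: no three distinct points of `Q` lie on a common line. -/
def InGeneralPosition {S : Type*} [MetricSpace S] (Q : Set S) : Prop :=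
  ∀ x ∈ Q, ∀ y ∈ Q, ∀ z ∈ Q, x ≠ y → y ≠ z → x ≠ z →
    ∀ L : Set S, IsLineSet L → ¬(x ∈ L ∧ y ∈ L ∧ z ∈ L)

/-- `L` is a tangent line of the set `K`. -/
def IsTangentLine {S : Type*} [MetricSpace S] (L K : Set S) : Prop :=
  IsLineSet L ∧ (K ∩ L).Nonempty ∧ ∃ H, IsClosedHalfplane L H ∧ K ⊆ H

/-- `L` is an inner bitangent of `K'` and `K''`. -/
def IsInnerBitangent {S : Type*} [MetricSpace S] (L K' K'' : Set S) : Prop :=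
  IsTangentLine L K' ∧ IsTangentLine L K'' ∧
    ∃ H₁ H₂, IsClosedHalfplane L H₁ ∧ IsClosedHalfplane L H₂ ∧ H₁ ≠ H₂ ∧
      K' ⊆ H₁ ∧ K'' ⊆ H₂

/-!
The embedding is a discrete Crofton formula. Extend the segments joining the points of `Q` to
points `p 0, …, p n = p 0` met in this cyclic order around a compact convex set `K`, so that any
two points of `Q` lie on a common chord `[p a, p b]`. Planarity enters only through the fact that
broken geodesics inside `K` with interlaced endpoints meet. For a chord `[p i, p j]` consider the
function of `q` which is the Gromov product of `p i` and `p j` seen from `q` on the inner side of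
the chord and `0` on the other side. Each mixed second difference in `(i, j)` of these functions is
monotone along every chord, and along `[p a, p b]` the sum of the absolute increments telescopes to
Gromov products adding up to the distance.
-/

section Geodesics

variable {S : Type*} [MetricSpace S] {x y z : S}

theorem IsGeodesicFromTo.dist_left {γ : ℝ → S} (hγ : IsGeodesicFromTo γ x y) {t : ℝ}
    (ht : t ∈ Icc 0 (dist x y)) : dist x (γ t) = t := by
  obtain ⟨hγ, h0, -⟩ := hγ
  have h := hγ 0 ⟨le_rfl, dist_nonneg⟩ t ht
  rwa [h0, zero_sub, abs_neg, abs_of_nonneg ht.1] at h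

theorem IsGeodesicFromTo.dist_right {γ : ℝ → S} (hγ : IsGeodesicFromTo γ x y) {t : ℝ}
    (ht : t ∈ Icc 0 (dist x y)) : dist (γ t) y = dist x y - t := by
  obtain ⟨hγ, -, h1⟩ := hγ
  have h := hγ t ht (dist x y) ⟨dist_nonneg, le_rfl⟩
  rwa [h1, abs_sub_comm, abs_of_nonneg (sub_nonneg.2 ht.2)] at h

theorem isGeodesicFromTo_of_dist_le {γ : ℝ → S} (h0 : γ 0 = x) (h1 : γ (dist x y) = y)
    (h : ∀ s t, 0 ≤ s → s ≤ t → t ≤ dist x y → dist (γ s) (γ t) ≤ t - s) :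
    IsGeodesicFromTo γ x y := by
  have h_eq : ∀ s t, 0 ≤ s → s ≤ t → t ≤ dist x y → dist (γ s) (γ t) = t - s := by
    intro s t hs hst ht
    refine (h s t hs hst ht).antisymm ?_
    have hxs := h 0 s le_rfl hs (hst.trans ht)
    have hty := h t _ (hs.trans hst) ht le_rfl
    rw [h0] at hxs
    rw [h1] at hty
    linarith [dist_triangle4 x (γ s) (γ t) y]
  refine ⟨fun s hs t ht ↦ ?_, h0, h1⟩
  rcases le_total s t with hst | hts
  · rw [h_eq s t hs.1 hst ht.2, abs_sub_comm, abs_of_nonneg (sub_nonneg.2 hst)]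
  · rw [dist_comm, h_eq t s ht.1 hts hs.2, abs_of_nonneg (sub_nonneg.2 hts)]

theorem IsGeodesicMetricSpace.exists_isGeodesicFromTo_through (hS : IsGeodesicMetricSpace S)
    (hz : dist x z + dist z y = dist x y) :
    ∃ γ : ℝ → S, IsGeodesicFromTo γ x y ∧ γ (dist x z) = z := by
  obtain ⟨γ₁, hγ₁⟩ := hS x z
  obtain ⟨γ₂, hγ₂⟩ := hS z y
  have hxz : 0 ≤ dist x z := dist_nonneg
  have hzy : 0 ≤ dist z y := dist_nonneg
  let γ : ℝ → S := fun t ↦ if t ≤ dist x z then γ₁ t else γ₂ (t - dist x z)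
  have γ_of_le {t : ℝ} (ht : t ≤ dist x z) : γ t = γ₁ t := if_pos ht
  have γ_of_ge {t : ℝ} (ht : dist x z ≤ t) : γ t = γ₂ (t - dist x z) := by
    rcases ht.eq_or_lt with rfl | ht
    · rw [γ_of_le le_rfl, hγ₁.2.2, sub_self, hγ₂.2.1]
    · exact if_neg ht.not_ge
  have γ_mid : γ (dist x z) = z := by rw [γ_of_le le_rfl, hγ₁.2.2]
  refine ⟨γ, isGeodesicFromTo_of_dist_le ?_ ?_ fun s t hs hst ht ↦ ?_, γ_mid⟩
  · rw [γ_of_le hxz, hγ₁.2.1]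
  · rw [γ_of_ge (by linarith), ← hz, add_sub_cancel_left, hγ₂.2.2]
  rcases le_total t (dist x z) with htz | hzt
  · rw [γ_of_le htz, γ_of_le (hst.trans htz), hγ₁.1 s ⟨hs, by linarith⟩ t ⟨by linarith, htz⟩,
      abs_sub_comm, abs_of_nonneg (by linarith)]
  have ht_mem : t - dist x z ∈ Icc 0 (dist z y) := ⟨by linarith, by linarith⟩
  rcases le_total s (dist x z) with hsz | hzs
  · rw [γ_of_le hsz, γ_of_ge hzt]
    have hs_z := hγ₁.dist_right ⟨hs, hsz⟩
    have hz_t := hγ₂.dist_left ht_mem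
    linarith [dist_triangle (γ₁ s) z (γ₂ (t - dist x z))]
  · rw [γ_of_ge hzs, γ_of_ge hzt, hγ₂.1 _ ⟨by linarith, by linarith⟩ _ ht_mem, abs_sub_comm,
      abs_of_nonneg (by linarith)]
    linarith

end Geodesics

namespace BusemannSurface

section Segments

variable {S : Type*} [MetricSpace S] {x y z w : S}

/-- The metric segment `[x, y]`: the points lying between `x` and `y`. In a Busemann space it is
the image of the unique geodesic from `x` to `y`. -/
def seg (x y : S) : Set S := {z | dist x z + dist z y = dist x y}

theorem mem_seg : z ∈ seg x y ↔ dist x z + dist z y = dist x y := Iff.rfl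

theorem left_mem_seg (x y : S) : x ∈ seg x y := by simp [mem_seg]

theorem right_mem_seg (x y : S) : y ∈ seg x y := by simp [mem_seg]

theorem seg_comm (x y : S) : seg x y = seg y x := by
  ext z
  rw [mem_seg, mem_seg, dist_comm y x, dist_comm y z, dist_comm z x, add_comm]

theorem mem_seg_symm (hz : z ∈ seg x y) : z ∈ seg y x := seg_comm x y ▸ hz

@[simp]
theorem seg_self (x : S) : seg x x = {x} := by
  ext z
  rw [mem_seg, dist_comm z x, dist_self, mem_singleton_iff, add_self_eq_zero, dist_eq_zero, eq_comm]

theorem dist_le_of_mem_seg (hz : z ∈ seg x y) : dist x z ≤ dist x y :=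
  (le_add_of_nonneg_right dist_nonneg).trans_eq hz

theorem mem_seg_right_of_mem_seg_left (hz : z ∈ seg x y) (hw : w ∈ seg x z) : z ∈ seg w y := by
  simp only [mem_seg] at *
  linarith [dist_triangle x w y, dist_triangle w z y]

theorem mem_seg_left_of_mem_seg_right (hz : z ∈ seg x y) (hw : w ∈ seg z y) : z ∈ seg x w :=
  mem_seg_symm (mem_seg_right_of_mem_seg_left (mem_seg_symm hz) (mem_seg_symm hw))

theorem seg_subset_left (hz : z ∈ seg x y) : seg x z ⊆ seg x y := by
  intro w hw
  simp only [mem_seg] at *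
  linarith [dist_triangle x w y, dist_triangle w z y]

theorem seg_subset_right (hz : z ∈ seg x y) : seg z y ⊆ seg x y := by
  rw [seg_comm z y, seg_comm x y]
  exact seg_subset_left (mem_seg_symm hz)

theorem exists_dist_eq_mul_of_mem_seg (hz : z ∈ seg x y) :
    ∃ t ∈ Icc (0 : ℝ) 1, dist x z = t * dist x y := by
  rcases eq_or_ne x y with rfl | hxy
  · exact ⟨0, left_mem_Icc.2 zero_le_one, by rw [seg_self] at hz; rw [hz]; simp⟩
  · have hpos := dist_pos.2 hxy
    exact ⟨dist x z / dist x y, ⟨by positivity, (div_le_one hpos).2 (dist_le_of_mem_seg hz)⟩,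
      by field_simp⟩

end Segments

section BusemannSegments

variable {S : Type*} [MetricSpace S] [hS : Fact (IsBusemannSpace S)] {x y z w x' y' z' : S}

theorem exists_mem_seg_dist_eq (x y : S) {r : ℝ} (hr : r ∈ Icc 0 (dist x y)) :
    ∃ z ∈ seg x y, dist x z = r := by
  obtain ⟨γ, hγ⟩ := hS.out.1 x y
  exact ⟨γ r, by rw [mem_seg, hγ.dist_left hr, hγ.dist_right hr, add_sub_cancel], hγ.dist_left hr⟩

theorem dist_le_of_dist_eq_mul {t : ℝ} (ht : t ∈ Icc (0 : ℝ) 1)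
    (hz : z ∈ seg x y) (hz' : z' ∈ seg x' y')
    (hxz : dist x z = t * dist x y) (hxz' : dist x' z' = t * dist x' y') :
    dist z z' ≤ (1 - t) * dist x x' + t * dist y y' := by
  obtain ⟨γ, ⟨hγ, hγ0, hγ1⟩, hγz⟩ := hS.out.1.exists_isGeodesicFromTo_through hz
  obtain ⟨γ', ⟨hγ', hγ0', hγ1'⟩, hγz'⟩ := hS.out.1.exists_isGeodesicFromTo_through hz'
  have h := (hS.out.2 γ γ' 0 (dist x y) 0 (dist x' y') dist_nonneg dist_nonneg hγ hγ').2
    (left_mem_Icc.2 zero_le_one) (right_mem_Icc.2 zero_le_one) (sub_nonneg.2 ht.2) ht.1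
    (sub_add_cancel 1 t)
  simp only [smul_eq_mul, mul_zero, mul_one, zero_add, sub_zero, one_mul, sub_self, zero_mul,
    hγ0, hγ0', hγ1, hγ1', ← hxz, ← hxz', hγz, hγz'] at h
  exact h

theorem eq_of_mem_seg_of_dist_eq (hz : z ∈ seg x y) (hz' : z' ∈ seg x y)
    (h : dist x z = dist x z') : z = z' := by
  obtain ⟨t, ht, hxz⟩ := exists_dist_eq_mul_of_mem_seg hz
  have hzz' := dist_le_of_dist_eq_mul ht hz hz' hxz (h ▸ hxz)
  rw [dist_self, dist_self, mul_zero, mul_zero, add_zero] at hzz'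
  exact dist_le_zero.1 hzz'

theorem mem_seg_of_dist_le (hz : z ∈ seg x y) (hz' : z' ∈ seg x y)
    (h : dist x z ≤ dist x z') : z ∈ seg x z' := by
  obtain ⟨w, hw, hxw⟩ := exists_mem_seg_dist_eq x z' ⟨dist_nonneg, h⟩
  rwa [← eq_of_mem_seg_of_dist_eq (seg_subset_left hz' hw) hz hxw]

theorem mem_seg_left_or_mem_seg_right (hz : z ∈ seg x y) (hw : w ∈ seg x y) :
    w ∈ seg x z ∨ w ∈ seg z y :=
  (le_total (dist x w) (dist x z)).imp (mem_seg_of_dist_le hw hz)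
    fun h ↦ mem_seg_right_of_mem_seg_left hw (mem_seg_of_dist_le hz hw h)

theorem segConvex_seg (x y : S) : SegConvex seg (seg x y) := by
  intro z hz w hw
  rcases mem_seg_left_or_mem_seg_right hz hw with h | h
  · rw [seg_comm]
    exact (seg_subset_right h).trans (seg_subset_left hz)
  · exact (seg_subset_left h).trans (seg_subset_right hz)

theorem dist_mul_dist_le_of_mem_seg (p : S) (hz : z ∈ seg x y) :
    dist x y * dist p z ≤ dist z y * dist p x + dist x z * dist p y := by
  obtain ⟨t, ht, hxz⟩ := exists_dist_eq_mul_of_mem_seg hz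
  have hzy : dist z y = (1 - t) * dist x y := by linarith [mem_seg.1 hz]
  have hconv : dist p z ≤ (1 - t) * dist p x + t * dist p y :=
    dist_le_of_dist_eq_mul ht (left_mem_seg p p) hz (by simp) hxz
  calc dist x y * dist p z ≤ dist x y * ((1 - t) * dist p x + t * dist p y) := by gcongr
    _ = dist z y * dist p x + dist x z * dist p y := by rw [hzy, hxz]; ring

-- Local geodesics are geodesics: compare `z`, which divides `[y, x]` in some ratio, with the point
-- dividing `[y, w]` in the same ratio.
theorem mem_seg_of_overlap (hz : z ∈ seg x y) (hy : y ∈ seg z w) (hne : z ≠ y) : y ∈ seg x w := by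
  obtain ⟨t, ht, hyz⟩ := exists_dist_eq_mul_of_mem_seg (mem_seg_symm hz)
  obtain ⟨b, hb, hyb⟩ := exists_mem_seg_dist_eq y w (r := t * dist y w)
    ⟨mul_nonneg ht.1 dist_nonneg, mul_le_of_le_one_left dist_nonneg ht.2⟩
  have hzb : dist z b = t * dist y x + t * dist y w := by
    rw [← mem_seg.1 (mem_seg_left_of_mem_seg_right hy hb), dist_comm z y, hyz, hyb]
  have hconv := dist_le_of_dist_eq_mul ht (mem_seg_symm hz) hb hyz hyb
  rw [dist_self, mul_zero, zero_add, hzb, ← mul_add] at hconv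
  have ht0 : 0 < t := ht.1.lt_of_ne (by rintro rfl; exact hne (by simpa [eq_comm] using hyz))
  rw [mem_seg, dist_comm x y]
  exact le_antisymm (le_of_mul_le_mul_left hconv ht0) (dist_comm y x ▸ dist_triangle x y w)

theorem exists_mem_seg_dist_eq_projIcc_mul (x y : S) (t : ℝ) :
    ∃ z ∈ seg x y, dist x z = projIcc 0 1 zero_le_one t * dist x y :=
  have ht := (projIcc (0 : ℝ) 1 zero_le_one t).2
  exists_mem_seg_dist_eq x y
    ⟨mul_nonneg ht.1 dist_nonneg, mul_le_of_le_one_left dist_nonneg ht.2⟩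

/-- The geodesic from `x` to `y` parametrized proportionally to arc length by `[0, 1]`; a
parameter outside `[0, 1]` is clamped. -/
noncomputable def geo (x y : S) (t : ℝ) : S := (exists_mem_seg_dist_eq_projIcc_mul x y t).choose

theorem geo_mem_seg (x y : S) (t : ℝ) : geo x y t ∈ seg x y :=
  (exists_mem_seg_dist_eq_projIcc_mul x y t).choose_spec.1

theorem dist_geo (x y : S) (t : ℝ) :
    dist x (geo x y t) = projIcc 0 1 zero_le_one t * dist x y :=
  (exists_mem_seg_dist_eq_projIcc_mul x y t).choose_spec.2

@[simp]
theorem geo_zero (x y : S) : geo x y 0 = x := by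
  have h := dist_geo x y 0
  rw [projIcc_left, zero_mul, dist_eq_zero] at h
  exact h.symm

@[simp]
theorem geo_one (x y : S) : geo x y 1 = y :=
  eq_of_mem_seg_of_dist_eq (geo_mem_seg x y 1) (right_mem_seg x y) <| by
    rw [dist_geo, projIcc_right, one_mul]

theorem seg_eq_image_geo (x y : S) : seg x y = geo x y '' Icc 0 1 := by
  refine Subset.antisymm (fun z hz ↦ ?_) (image_subset_iff.2 fun t _ ↦ geo_mem_seg x y t)
  obtain ⟨t, ht, hxz⟩ := exists_dist_eq_mul_of_mem_seg hz
  refine ⟨t, ht, eq_of_mem_seg_of_dist_eq (geo_mem_seg x y t) hz ?_⟩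
  rw [dist_geo, hxz, projIcc_of_mem zero_le_one ht]

theorem geo_mem_seg_geo (x y : S) {s t : ℝ} (hst : s ≤ t) : geo x y s ∈ seg x (geo x y t) := by
  refine mem_seg_of_dist_le (geo_mem_seg x y s) (geo_mem_seg x y t) ?_
  rw [dist_geo, dist_geo]
  exact mul_le_mul_of_nonneg_right (monotone_projIcc zero_le_one hst) dist_nonneg

theorem dist_geo_geo_le (x y : S) (s t : ℝ) :
    dist (geo x y s) (geo x y t) ≤ |s - t| * dist x y := by
  wlog hst : s ≤ t generalizing s t
  · rw [dist_comm, abs_sub_comm]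
    exact this t s (le_of_not_ge hst)
  have hmem := mem_seg.1 (geo_mem_seg_geo x y hst)
  have habs := abs_projIcc_sub_projIcc (zero_le_one (α := ℝ)) (c := t) (d := s)
  rw [dist_geo, dist_geo] at hmem
  calc dist (geo x y s) (geo x y t)
      = (projIcc 0 1 zero_le_one t - projIcc 0 1 zero_le_one s : ℝ) * dist x y := by linarith
    _ ≤ |s - t| * dist x y := by
      rw [abs_sub_comm s t]
      exact mul_le_mul_of_nonneg_right ((le_abs_self _).trans habs) dist_nonneg

theorem dist_geo_le_dist (x y y' : S) (t : ℝ) : dist (geo x y t) (geo x y' t) ≤ dist y y' := by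
  have ht := (projIcc (0 : ℝ) 1 zero_le_one t).2
  have h := dist_le_of_dist_eq_mul ht (geo_mem_seg x y t) (geo_mem_seg x y' t) (dist_geo x y t)
    (dist_geo x y' t)
  rw [dist_self, mul_zero, zero_add] at h
  exact h.trans (mul_le_of_le_one_left dist_nonneg ht.2)

theorem continuous_geo (x : S) : Continuous fun p : S × ℝ ↦ geo x p.1 p.2 := by
  rw [continuous_iff_continuousAt]
  rintro ⟨y, t⟩
  rw [ContinuousAt, tendsto_iff_dist_tendsto_zero]
  have hbound (p : S × ℝ) :
      dist (geo x p.1 p.2) (geo x y t) ≤ dist p.1 y + |p.2 - t| * dist x y :=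
    (dist_triangle _ _ _).trans (add_le_add (dist_geo_le_dist x _ _ _) (dist_geo_geo_le x _ _ _))
  have hlim : Continuous fun p : S × ℝ ↦ dist p.1 y + |p.2 - t| * dist x y := by fun_prop
  exact squeeze_zero (fun _ ↦ dist_nonneg) hbound (by simpa using hlim.tendsto (y, t))

theorem continuous_geo_right (x y : S) : Continuous (geo x y) :=
  (continuous_geo x).comp (Continuous.prodMk_right y)

theorem isCompact_seg (x y : S) : IsCompact (seg x y) := by
  rw [seg_eq_image_geo]
  exact isCompact_Icc.image (continuous_geo_right x y)

theorem joinedIn_seg (x y : S) : JoinedIn (seg x y) x y :=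
  JoinedIn.ofLine (continuous_geo_right x y).continuousOn (geo_zero x y) (geo_one x y)
    (seg_eq_image_geo x y).superset

end BusemannSegments

section ComplexLogarithms

open Complex

theorem exists_continuous_exp_eq {X : Type*} [TopologicalSpace X] [SimplyConnectedSpace X]
    [LocallyPathConnectedSpace X] {f : X → ℂ} (hf : Continuous f) (hf0 : ∀ x, f x ≠ 0) :
    ∃ g : X → ℂ, Continuous g ∧ ∀ x, exp (g x) = f x := by
  let x₀ : X := Classical.arbitrary X
  let F : C(X, {z : ℂ // z ≠ 0}) := ⟨fun x ↦ ⟨f x, hf0 x⟩, by fun_prop⟩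
  obtain ⟨g, ⟨-, hg⟩, -⟩ := isCoveringMap_exp.existsUnique_continuousMap_lifts F x₀
    (log (f x₀)) (Subtype.ext (exp_log (hf0 x₀)))
  exact ⟨g, g.continuous, fun x ↦ congrArg Subtype.val (congrFun hg x)⟩

theorem sub_eq_sub_of_exp_eq_exp {X : Type*} [TopologicalSpace X] [PreconnectedSpace X]
    {f g : X → ℂ} (hf : Continuous f) (hg : Continuous g) (h : ∀ x, exp (f x) = exp (g x))
    (x y : X) : f x - f y = g x - g y := by
  have hlift := isCoveringMap_exp.eq_of_comp_eq hf (hg.add_const (f y - g y))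
    (funext fun z ↦ Subtype.ext <| by simp [exp_add, exp_sub, h]) y (by ring)
  rw [congrFun hlift x]
  ring

theorem one_sub_mem_slitPlane {u : ℂ} (hu : ‖u‖ ≤ 1) (hu1 : u ≠ 1) : 1 - u ∈ slitPlane := by
  refine Or.inl (sub_pos.2 ((re_le_norm u).trans hu |>.lt_of_ne fun hre ↦ hu1 ?_))
  have him : u.im = 0 := by
    have hsq := Complex.sq_norm u
    rw [normSq_apply, hre] at hsq
    nlinarith [norm_nonneg u, sq_nonneg u.im]
  exact Complex.ext hre him

theorem one_sub_exp_mul_I (δ : ℝ) :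
    1 - exp (δ * I) = (2 * Real.sin (δ / 2) : ℝ) * exp (((δ - Real.pi) / 2 : ℝ) * I) := by
  have hexp : exp (((δ - Real.pi) / 2 : ℝ) * I) = exp (δ / 2 * I) * -I := by
    rw [← exp_neg_pi_div_two_mul_I, ← exp_add]
    push_cast
    ring_nf
  have hcancel : exp (-(δ / 2) * I) * exp (δ / 2 * I) = 1 := by
    rw [← exp_add, ← add_mul, neg_add_cancel, zero_mul, exp_zero]
  have hsq : exp (δ / 2 * I) * exp (δ / 2 * I) = exp (δ * I) := by
    rw [← exp_add, ← add_mul, add_halves]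
  rw [hexp]
  push_cast
  rw [sin]
  linear_combination (exp (-(δ / 2) * I) * exp (δ / 2 * I) - exp (δ / 2 * I) ^ 2) * I_sq -
    hcancel + hsq

theorem log_one_sub_exp_mul_I_im_of_pos {δ : ℝ} (h0 : 0 < δ) (h1 : δ < 2 * Real.pi) :
    (log (1 - exp (δ * I))).im = (δ - Real.pi) / 2 := by
  have hsin : 0 < Real.sin (δ / 2) := Real.sin_pos_of_pos_of_lt_pi (by linarith) (by linarith)
  have him : (((δ - Real.pi) / 2 : ℝ) * I).im = (δ - Real.pi) / 2 := by simp
  rw [one_sub_exp_mul_I, log_im, arg_real_mul _ (by positivity), ← log_im, log_exp, him]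
  all_goals rw [him]; linarith [Real.pi_pos]

theorem log_one_sub_exp_mul_I_im_of_neg {δ : ℝ} (h0 : -(2 * Real.pi) < δ) (h1 : δ < 0) :
    (log (1 - exp (δ * I))).im = (δ + Real.pi) / 2 := by
  have h := log_one_sub_exp_mul_I_im_of_pos (δ := δ + 2 * Real.pi) (by linarith) (by linarith)
  push_cast at h
  rw [add_mul, exp_periodic] at h
  rw [h]
  ring

/-- The angle under which the boundary point `R e^{iθ}` of a disc sees the boundary point
`R e^{i(θ + δ)}`, up to a constant depending on `θ` only. -/
noncomputable def chordAngle (δ : ℝ) : ℝ := (log (1 - exp (δ * I))).im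

theorem circleMap_div_circleMap {R : ℝ} (hR : 0 < R) (θ θ' : ℝ) :
    circleMap 0 R θ' / circleMap 0 R θ = exp ((θ' - θ : ℝ) * I) := by
  rw [circleMap_zero, circleMap_zero, mul_div_mul_left _ _ (ofReal_ne_zero.2 hR.ne'), ← exp_sub]
  push_cast
  rw [sub_mul]

theorem im_sub_eq_chordAngle_sub {X : Type*} [TopologicalSpace X] [PreconnectedSpace X] {R : ℝ}
    (hR : 0 < R) {f α : X → ℂ} (hf : Continuous f) (hα : Continuous α) (hαR : ∀ t, ‖α t‖ ≤ R)
    {θ θ₀ θ₁ : ℝ} {c : ℂ} (hexp : ∀ t, exp (f t) = c * (circleMap 0 R θ - α t)) {x y : X}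
    (hx : α x = circleMap 0 R θ₁) (hy : α y = circleMap 0 R θ₀) :
    (f x - f y).im = chordAngle (θ₁ - θ) - chordAngle (θ₀ - θ) := by
  have hz : circleMap 0 R θ ≠ 0 := circleMap_ne_center hR.ne'
  have hc : c * circleMap 0 R θ ≠ 0 :=
    mul_ne_zero (left_ne_zero_of_mul (hexp x ▸ exp_ne_zero _)) hz
  have hslit (t : X) : 1 - α t / circleMap 0 R θ ∈ slitPlane := by
    refine one_sub_mem_slitPlane ?_ fun h ↦ ?_
    · rw [norm_div, norm_circleMap_zero, abs_of_pos hR]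
      exact (div_le_one hR).2 (hαR t)
    · rw [div_eq_one_iff_eq hz] at h
      exact exp_ne_zero (f t) (by rw [hexp, h, sub_self, mul_zero])
  have hsub := sub_eq_sub_of_exp_eq_exp hf
    (g := fun t ↦ log (c * circleMap 0 R θ) + log (1 - α t / circleMap 0 R θ))
    (continuous_const.add (Continuous.clog (by fun_prop) hslit))
    (fun t ↦ by
      rw [hexp, exp_add, exp_log hc, exp_log (slitPlane_ne_zero (hslit t))]
      field_simp) x y
  rw [hsub, add_sub_add_left_eq_sub, sub_im, hx, hy, circleMap_div_circleMap hR,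
    circleMap_div_circleMap hR, chordAngle, chordAngle]

-- A continuous logarithm of `α s - β t` would have total variation zero along the boundary of the
-- parameter square, but the four sides contribute `± 2π` in total.
theorem exists_eq_of_interlaced_args {R : ℝ} (hR : 0 < R) {α β : ℝ → ℂ} (hα : Continuous α)
    (hβ : Continuous β) (hαR : ∀ t, ‖α t‖ ≤ R) (hβR : ∀ t, ‖β t‖ ≤ R) {θ₁ θ₂ θ₃ θ₄ : ℝ}
    (h₁₂ : θ₁ < θ₂) (h₂₃ : θ₂ < θ₃) (h₃₄ : θ₃ < θ₄) (h₄₁ : θ₄ < θ₁ + 2 * Real.pi)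
    (hα₀ : α 0 = circleMap 0 R θ₁) (hβ₀ : β 0 = circleMap 0 R θ₂)
    (hα₁ : α 1 = circleMap 0 R θ₃) (hβ₁ : β 1 = circleMap 0 R θ₄) :
    ∃ s t, α s = β t := by
  by_contra! hne
  obtain ⟨L, hL, hexp⟩ := exists_continuous_exp_eq (f := fun p : ℝ × ℝ ↦ α p.1 - β p.2)
    (by fun_prop) fun p ↦ sub_ne_zero.2 (hne p.1 p.2)
  have α_side {t θ : ℝ} (ht : β t = circleMap 0 R θ) :
      (L (1, t) - L (0, t)).im = chordAngle (θ₃ - θ) - chordAngle (θ₁ - θ) :=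
    im_sub_eq_chordAngle_sub hR (f := fun s ↦ L (s, t)) (by fun_prop) hα hαR (c := -1)
      (fun s ↦ by rw [hexp, ← ht]; ring) hα₁ hα₀
  have β_side {s θ : ℝ} (hs : α s = circleMap 0 R θ) :
      (L (s, 1) - L (s, 0)).im = chordAngle (θ₄ - θ) - chordAngle (θ₂ - θ) :=
    im_sub_eq_chordAngle_sub hR (f := fun t ↦ L (s, t)) (by fun_prop) hβ hβR (c := 1)
      (fun t ↦ by rw [hexp, ← hs, one_mul]) hβ₁ hβ₀
  have chordAngle_pos {θ θ' : ℝ} (h : θ < θ') (h' : θ' < θ + 2 * Real.pi) :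
      chordAngle (θ' - θ) = (θ' - θ - Real.pi) / 2 :=
    log_one_sub_exp_mul_I_im_of_pos (by linarith) (by linarith)
  have chordAngle_neg {θ θ' : ℝ} (h : θ < θ') (h' : θ' < θ + 2 * Real.pi) :
      chordAngle (θ - θ') = (θ - θ' + Real.pi) / 2 :=
    log_one_sub_exp_mul_I_im_of_neg (by linarith) (by linarith)
  have bottom := α_side hβ₀
  have top := α_side hβ₁
  have left := β_side hα₀
  have right := β_side hα₁
  rw [chordAngle_pos h₂₃ (by linarith), chordAngle_neg h₁₂ (by linarith)] at bottom
  rw [chordAngle_neg h₃₄ (by linarith), chordAngle_neg (by linarith) h₄₁] at top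
  rw [chordAngle_pos (by linarith) h₄₁, chordAngle_pos h₁₂ (by linarith)] at left
  rw [chordAngle_pos h₃₄ (by linarith), chordAngle_neg h₂₃ (by linarith)] at right
  simp only [sub_im] at bottom top left right
  linarith [Real.pi_pos]

end ComplexLogarithms

section Crosscuts

variable {X : Type*} [TopologicalSpace X] {φ : X ≃ₜ ℂ} {R : ℝ} {A B : Set X}
  {e₁ e₂ e₃ e₄ : X}

/-- The closed disc of radius `R` in the coordinate `φ`. -/
def chartDisc (φ : X ≃ₜ ℂ) (R : ℝ) : Set X := {x | ‖φ x‖ ≤ R}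

/-- `A` is a subset of the disc `chartDisc φ R` inside which two points of the boundary circle
are joined by a path. -/
structure IsCrosscut (φ : X ≃ₜ ℂ) (R : ℝ) (A : Set X) (e e' : X) : Prop where
  subset_disc : A ⊆ chartDisc φ R
  norm_left : ‖φ e‖ = R
  norm_right : ‖φ e'‖ = R
  joinedIn : JoinedIn A e e'

theorem IsCrosscut.symm (hA : IsCrosscut φ R A e₁ e₂) : IsCrosscut φ R A e₂ e₁ :=
  ⟨hA.1, hA.3, hA.2, hA.4.symm⟩

theorem eq_of_norm_eq_of_arg_eq (h₁ : ‖φ e₁‖ = R) (h₂ : ‖φ e₂‖ = R)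
    (h : (φ e₁).arg = (φ e₂).arg) : e₁ = e₂ :=
  φ.injective (Complex.ext_norm_arg (h₁.trans h₂.symm) h)

theorem IsCrosscut.inter_nonempty_of_arg_lt (hA : IsCrosscut φ R A e₁ e₃)
    (hB : IsCrosscut φ R B e₂ e₄) (h₁₂ : (φ e₁).arg < (φ e₂).arg)
    (h₂₃ : (φ e₂).arg < (φ e₃).arg) (h₃₄ : (φ e₃).arg < (φ e₄).arg) : (A ∩ B).Nonempty := by
  have polar {e : X} (he : ‖φ e‖ = R) : φ e = circleMap 0 R (φ e).arg := by
    rw [circleMap_zero, ← he, Complex.norm_mul_exp_arg_mul_I]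
  have hR : 0 < R := by
    refine (hA.norm_left ▸ norm_nonneg _).lt_of_ne fun hR ↦ h₁₂.ne ?_
    rw [norm_eq_zero.1 (hA.norm_left.trans hR.symm), norm_eq_zero.1 (hB.norm_left.trans hR.symm)]
  have h₄₁ : (φ e₄).arg < (φ e₁).arg + 2 * Real.pi := by
    linarith [Complex.arg_le_pi (φ e₄), Complex.neg_pi_lt_arg (φ e₁)]
  obtain ⟨γ, hγ⟩ := hA.joinedIn
  obtain ⟨γ', hγ'⟩ := hB.joinedIn
  have hγ (t : ℝ) : γ.extend t ∈ A := hγ _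
  have hγ' (t : ℝ) : γ'.extend t ∈ B := hγ' _
  obtain ⟨s, t, hst⟩ := exists_eq_of_interlaced_args hR (α := fun t ↦ φ (γ.extend t))
    (β := fun t ↦ φ (γ'.extend t)) (by fun_prop) (by fun_prop)
    (fun t ↦ hA.subset_disc (hγ t)) (fun t ↦ hB.subset_disc (hγ' t)) h₁₂ h₂₃ h₃₄ h₄₁
    (by rw [γ.extend_zero, ← polar hA.norm_left]) (by rw [γ'.extend_zero, ← polar hB.norm_left])
    (by rw [γ.extend_one, ← polar hA.norm_right]) (by rw [γ'.extend_one, ← polar hB.norm_right])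
  exact ⟨γ.extend s, hγ s, φ.injective hst ▸ hγ' t⟩

variable {A₁₂ A₁₃ A₁₄ A₂₃ A₂₄ A₃₄ : Set X}

theorem exists_crosscuts_inter_nonempty_of_arg_lt
    (h₁₂ : (φ e₁).arg < (φ e₂).arg) (h₁₃ : (φ e₁).arg < (φ e₃).arg)
    (h₁₄ : (φ e₁).arg < (φ e₄).arg) (d₂₃ : e₂ ≠ e₃) (d₂₄ : e₂ ≠ e₄) (d₃₄ : e₃ ≠ e₄)
    (c₁₂ : IsCrosscut φ R A₁₂ e₁ e₂) (c₃₄ : IsCrosscut φ R A₃₄ e₃ e₄)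
    (c₁₃ : IsCrosscut φ R A₁₃ e₁ e₃) (c₂₄ : IsCrosscut φ R A₂₄ e₂ e₄)
    (c₁₄ : IsCrosscut φ R A₁₄ e₁ e₄) (c₂₃ : IsCrosscut φ R A₂₃ e₂ e₃) :
    (A₁₂ ∩ A₃₄).Nonempty ∨ (A₁₃ ∩ A₂₄).Nonempty ∨ (A₁₄ ∩ A₂₃).Nonempty := by
  have h₂₃ := mt (eq_of_norm_eq_of_arg_eq c₂₃.2 c₂₃.3) d₂₃
  have h₂₄ := mt (eq_of_norm_eq_of_arg_eq c₂₄.2 c₂₄.3) d₂₄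
  have h₃₄ := mt (eq_of_norm_eq_of_arg_eq c₃₄.2 c₃₄.3) d₃₄
  rcases lt_or_gt_of_ne h₂₃ with h₂₃ | h₃₂ <;> rcases lt_or_gt_of_ne h₂₄ with h₂₄ | h₄₂ <;>
    rcases lt_or_gt_of_ne h₃₄ with h₃₄ | h₄₃
  · exact .inr (.inl (c₁₃.inter_nonempty_of_arg_lt c₂₄ h₁₂ h₂₃ h₃₄))
  · exact .inr (.inr (c₁₄.inter_nonempty_of_arg_lt c₂₃ h₁₂ h₂₄ h₄₃))
  · exact absurd (h₂₃.trans h₃₄) h₄₂.asymm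
  · exact .inl (c₁₂.inter_nonempty_of_arg_lt c₃₄.symm h₁₄ h₄₂ h₂₃)
  · exact .inl (c₁₂.inter_nonempty_of_arg_lt c₃₄ h₁₃ h₃₂ h₂₄)
  · exact absurd (h₂₄.trans h₄₃) h₃₂.asymm
  · exact .inr (.inr (c₁₄.inter_nonempty_of_arg_lt c₂₃.symm h₁₃ h₃₄ h₄₂))
  · exact .inr (.inl (c₁₃.inter_nonempty_of_arg_lt c₂₄.symm h₁₄ h₄₃ h₃₂))

theorem exists_crosscuts_inter_nonempty (d₁₂ : e₁ ≠ e₂) (d₁₃ : e₁ ≠ e₃) (d₁₄ : e₁ ≠ e₄)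
    (d₂₃ : e₂ ≠ e₃) (d₂₄ : e₂ ≠ e₄) (d₃₄ : e₃ ≠ e₄)
    (c₁₂ : IsCrosscut φ R A₁₂ e₁ e₂) (c₃₄ : IsCrosscut φ R A₃₄ e₃ e₄)
    (c₁₃ : IsCrosscut φ R A₁₃ e₁ e₃) (c₂₄ : IsCrosscut φ R A₂₄ e₂ e₄)
    (c₁₄ : IsCrosscut φ R A₁₄ e₁ e₄) (c₂₃ : IsCrosscut φ R A₂₃ e₂ e₃) :
    (A₁₂ ∩ A₃₄).Nonempty ∨ (A₁₃ ∩ A₂₄).Nonempty ∨ (A₁₄ ∩ A₂₃).Nonempty := by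
  have h₁₂ := mt (eq_of_norm_eq_of_arg_eq c₁₂.2 c₁₂.3) d₁₂
  have h₁₃ := mt (eq_of_norm_eq_of_arg_eq c₁₃.2 c₁₃.3) d₁₃
  have h₁₄ := mt (eq_of_norm_eq_of_arg_eq c₁₄.2 c₁₄.3) d₁₄
  have h₂₃ := mt (eq_of_norm_eq_of_arg_eq c₂₃.2 c₂₃.3) d₂₃
  have h₂₄ := mt (eq_of_norm_eq_of_arg_eq c₂₄.2 c₂₄.3) d₂₄
  have h₃₄ := mt (eq_of_norm_eq_of_arg_eq c₃₄.2 c₃₄.3) d₃₄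
  have hmin :
      ((φ e₁).arg < (φ e₂).arg ∧ (φ e₁).arg < (φ e₃).arg ∧ (φ e₁).arg < (φ e₄).arg) ∨
      ((φ e₂).arg < (φ e₁).arg ∧ (φ e₂).arg < (φ e₄).arg ∧ (φ e₂).arg < (φ e₃).arg) ∨
      ((φ e₃).arg < (φ e₄).arg ∧ (φ e₃).arg < (φ e₁).arg ∧ (φ e₃).arg < (φ e₂).arg) ∨
      ((φ e₄).arg < (φ e₃).arg ∧ (φ e₄).arg < (φ e₂).arg ∧ (φ e₄).arg < (φ e₁).arg) := by
    grind
  rcases hmin with ⟨h, h', h''⟩ | ⟨h, h', h''⟩ | ⟨h, h', h''⟩ | ⟨h, h', h''⟩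
  · exact exists_crosscuts_inter_nonempty_of_arg_lt h h' h'' d₂₃ d₂₄ d₃₄ c₁₂ c₃₄ c₁₃ c₂₄ c₁₄ c₂₃
  · rw [inter_comm A₁₃, inter_comm A₁₄]
    exact exists_crosscuts_inter_nonempty_of_arg_lt h h' h'' d₁₄ d₁₃ d₃₄.symm
      c₁₂.symm c₃₄.symm c₂₄ c₁₃ c₂₃ c₁₄
  · rw [inter_comm A₁₂, inter_comm A₁₄]
    exact exists_crosscuts_inter_nonempty_of_arg_lt h h' h'' d₁₄.symm d₂₄.symm d₁₂
      c₃₄ c₁₂ c₁₃.symm c₂₄.symm c₂₃.symm c₁₄.symm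
  · rw [inter_comm A₁₂, inter_comm A₁₃]
    exact exists_crosscuts_inter_nonempty_of_arg_lt h h' h'' d₂₃.symm d₁₃.symm d₁₂.symm
      c₃₄.symm c₁₂.symm c₂₄.symm c₁₃.symm c₁₄.symm c₂₃.symm

end Crosscuts

open Filter Topology

section SegmentTopology

variable {S : Type*} [MetricSpace S] [Fact (IsBusemannSpace S)] {x y : S} {U C : Set S}

theorem eventually_seg_subset (hU : IsOpen U) (h : seg x y ⊆ U) : ∀ᶠ z in 𝓝 y, seg x z ⊆ U := by
  have hgeo : ∀ᶠ z in 𝓝 y, ∀ t ∈ Icc (0 : ℝ) 1, geo x z t ∈ U :=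
    isCompact_Icc.eventually_forall_of_forall_eventually fun t _ ↦
      (continuous_geo x).continuousAt.eventually (hU.mem_nhds (h (geo_mem_seg x y t)))
  filter_upwards [hgeo] with z hz
  rw [seg_eq_image_geo]
  exact image_subset_iff.2 hz

theorem isClosed_setOf_seg_subset (x : S) (hC : IsClosed C) : IsClosed {y | seg x y ⊆ C} := by
  have h : {y | seg x y ⊆ C} = ⋂ t ∈ Icc (0 : ℝ) 1, (fun y ↦ geo x y t) ⁻¹' C := by
    ext y
    simp only [seg_eq_image_geo, image_subset_iff, mem_iInter₂]
    rfl
  rw [h]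
  exact isClosed_biInter fun t _ ↦
    hC.preimage ((continuous_geo x).comp (Continuous.prodMk_left t))

theorem exists_ne_seg_subset_of_mem_nhds (hxy : x ≠ y) (hU : U ∈ 𝓝 x) :
    ∃ w ∈ seg x y, w ≠ x ∧ seg x w ⊆ U := by
  obtain ⟨ε, hε, hball⟩ := Metric.mem_nhds_iff.1 hU
  have hpos := dist_pos.2 hxy
  obtain ⟨w, hw, hxw⟩ := exists_mem_seg_dist_eq x y (r := min (ε / 2) (dist x y))
    ⟨by positivity, min_le_right _ _⟩
  refine ⟨w, hw, (dist_pos.1 (hxw ▸ by positivity)).symm, fun z hz ↦ hball ?_⟩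
  rw [mem_ball, dist_comm]
  linarith [dist_le_of_mem_seg hz, min_le_left (ε / 2) (dist x y)]

theorem exists_last_mem_seg (hC : IsClosed C) (h : (C ∩ seg x y).Nonempty) :
    ∃ z ∈ C ∩ seg x y, ∀ w ∈ C, w ∈ seg z y → w = z := by
  obtain ⟨z, hz, hmax⟩ := ((isCompact_seg x y).inter_left hC).exists_isMaxOn h
    (f := fun w ↦ dist x w) (by fun_prop)
  refine ⟨z, hz, fun w hwC hw ↦ ?_⟩
  have hwmax : dist x w ≤ dist x z := hmax ⟨hwC, seg_subset_right hz.2 hw⟩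
  have hzw := mem_seg.1 (mem_seg_left_of_mem_seg_right hz.2 hw)
  exact (dist_le_zero.1 (by linarith)).symm

end SegmentTopology

section Extension

theorem isCompact_chartDisc {X : Type*} [TopologicalSpace X] (φ : X ≃ₜ ℂ) (R : ℝ) :
    IsCompact (chartDisc φ R) := by
  have h : chartDisc φ R = φ ⁻¹' closedBall 0 R := by
    ext
    simp [chartDisc]
  rw [h]
  exact φ.isCompact_preimage.2 (isCompact_closedBall 0 R)

theorem isOpen_setOf_norm_lt {X : Type*} [TopologicalSpace X] (φ : X ≃ₜ ℂ) (R : ℝ) :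
    IsOpen {x | ‖φ x‖ < R} :=
  isOpen_lt (by fun_prop) continuous_const

theorem exists_forall_norm_lt {X : Type*} [TopologicalSpace X] (φ : X ≃ₜ ℂ) {K : Set X}
    (hK : IsCompact K) : ∃ R, ∀ x ∈ K, ‖φ x‖ < R := by
  obtain ⟨C, hC⟩ := hK.exists_bound_of_continuousOn φ.continuous.continuousOn
  exact ⟨C + 1, fun x hx ↦ (hC x hx).trans_lt (lt_add_one C)⟩

variable {S : Type*} [MetricSpace S] [Fact (IsBusemannSpace S)] {φ : S ≃ₜ ℂ} {R : ℝ} {o x : S}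

-- Otherwise contracting a small circle around `x` along the geodesics to `o` would be a
-- null-homotopy of that circle avoiding `x`.
theorem exists_ne_mem_seg (φ : S ≃ₜ ℂ) (o x : S) : ∃ y, y ≠ x ∧ x ∈ seg o y := by
  by_contra! hcon
  let c : ℝ → S := fun θ ↦ φ.symm (φ x + Complex.exp (θ * Complex.I))
  have hφc (θ : ℝ) : φ (c θ) - φ x = Complex.exp (θ * Complex.I) := by
    rw [φ.apply_symm_apply, add_sub_cancel_left]
  have hcx (θ : ℝ) : c θ ≠ x := fun h ↦ Complex.exp_ne_zero (θ * Complex.I) <| by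
    rw [← hφc, h, sub_self]
  have hcont : Continuous fun p : ℝ × ℝ ↦ φ (geo o (c p.1) p.2) - φ x := by
    have hgeo : Continuous fun p : ℝ × ℝ ↦ geo o (c p.1) p.2 :=
      (continuous_geo o).comp (by fun_prop : Continuous fun p : ℝ × ℝ ↦ (c p.1, p.2))
    fun_prop
  obtain ⟨L, hL, hexp⟩ := exists_continuous_exp_eq hcont fun p ↦
    sub_ne_zero.2 fun h ↦ hcon _ (hcx p.1) (φ.injective h ▸ geo_mem_seg _ _ _)
  have hperiod : c (2 * Real.pi) = c 0 := by simp [c, Complex.exp_two_pi_mul_I]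
  have sides := sub_eq_sub_of_exp_eq_exp (f := fun t ↦ L (2 * Real.pi, t))
    (g := fun t ↦ L (0, t)) (by fun_prop) (by fun_prop)
    (fun t ↦ by simp only [hexp, hperiod]) 1 0
  have bottom := sub_eq_sub_of_exp_eq_exp (f := fun s ↦ L (s, 0)) (g := fun _ ↦ L (0, 0))
    (by fun_prop) (by fun_prop) (fun s ↦ by simp only [hexp, geo_zero]) (2 * Real.pi) 0
  have top := sub_eq_sub_of_exp_eq_exp (f := fun s ↦ L (s, 1))
    (g := fun s : ℝ ↦ s * Complex.I) (by fun_prop) (by fun_prop)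
    (fun s ↦ by simp only [hexp, geo_one, hφc]) (2 * Real.pi) 0
  refine Complex.two_pi_I_ne_zero ?_
  push_cast at top
  linear_combination sides + bottom - top

theorem exists_norm_eq_mem_seg (o : S) (hx : ‖φ x‖ ≤ R) :
    ∃ e, ‖φ e‖ = R ∧ x ∈ seg o e ∧ seg x e ⊆ chartDisc φ R := by
  let Y : Set S := {y | x ∈ seg o y} ∩ {y | seg x y ⊆ chartDisc φ R}
  have hY : IsCompact Y := by
    refine (isCompact_chartDisc φ R).of_isClosed_subset (IsClosed.inter ?_ ?_)
      fun y hy ↦ hy.2 (right_mem_seg x y)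
    · exact isClosed_eq (by fun_prop) (by fun_prop)
    · exact isClosed_setOf_seg_subset x (isCompact_chartDisc φ R).isClosed
  have hxY : x ∈ Y := ⟨right_mem_seg _ _, by rw [mem_ofPred_eq, seg_self]; rintro _ rfl; exact hx⟩
  obtain ⟨e, ⟨hxe, hed⟩, hmax⟩ := hY.exists_isMaxOn ⟨x, hxY⟩ (f := fun y ↦ dist o y) (by fun_prop)
  refine ⟨e, ?_, hxe, hed⟩
  by_contra hne
  have hlt : ‖φ e‖ < R := lt_of_le_of_ne (hed (right_mem_seg x e)) hne
  obtain ⟨y, hye, hy⟩ := exists_ne_mem_seg φ o e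
  obtain ⟨w, hw, hwe, hewd⟩ := exists_ne_seg_subset_of_mem_nhds hye.symm
    ((isOpen_setOf_norm_lt φ R).mem_nhds hlt)
  have heow := mem_seg_left_of_mem_seg_right hy hw
  have hwY : w ∈ Y := by
    refine ⟨seg_subset_left heow hxe, fun z hz ↦ ?_⟩
    rcases mem_seg_left_or_mem_seg_right (mem_seg_right_of_mem_seg_left heow hxe) hz with h | h
    · exact hed h
    · exact (show ‖φ z‖ < R from hewd h).le
  have hle : dist o w ≤ dist o e := hmax hwY
  exact hwe (dist_le_zero.1 (by linarith [mem_seg.1 heow])).symm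

end Extension

section Rays

variable {S : Type*} [MetricSpace S] {φ : S ≃ₜ ℂ} {R : ℝ} {a b c g u u' x y e e' e₁ e₂ : S}

/-- `[a, e]` is a geodesic in the disc `chartDisc φ R` that issues from `a`, passes through `u`
and ends on the boundary circle. -/
structure IsRay (φ : S ≃ₜ ℂ) (R : ℝ) (a u e : S) : Prop where
  mem : u ∈ seg a e
  norm_eq : ‖φ e‖ = R
  subset_disc : seg a e ⊆ chartDisc φ R

theorem fan_inter_seg_nonempty_of_inter_bridge (hu : u ∈ seg a e) (hu' : u' ∈ seg a e')
    (h : ((seg a e₁ ∪ seg a e₂) ∩ (seg u e ∪ seg u u' ∪ seg u' e')).Nonempty) :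
    ((seg a e₁ ∪ seg a e₂) ∩ seg u u').Nonempty := by
  have pull {v f : S} (hv : v ∈ seg a f) {z : S} (hz : z ∈ seg a e₁ ∪ seg a e₂)
      (hzv : z ∈ seg v f) : v ∈ seg a e₁ ∪ seg a e₂ :=
    hz.imp (fun h ↦ seg_subset_left h (mem_seg_left_of_mem_seg_right hv hzv))
      (fun h ↦ seg_subset_left h (mem_seg_left_of_mem_seg_right hv hzv))
  obtain ⟨z, hz, (hzu | hzm) | hzu'⟩ := h
  · exact ⟨u, pull hu hz hzu, left_mem_seg u u'⟩
  · exact ⟨z, hz, hzm⟩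
  · exact ⟨u', pull hu' hz hzu', right_mem_seg u u'⟩

variable [Fact (IsBusemannSpace S)]

theorem exists_isRay (hd : seg a u ⊆ chartDisc φ R) : ∃ e, IsRay φ R a u e := by
  obtain ⟨e, he, hue, hued⟩ := exists_norm_eq_mem_seg a (hd (right_mem_seg a u))
  exact ⟨e, hue, he, fun z hz ↦
    (mem_seg_left_or_mem_seg_right hue hz).elim (fun h ↦ hd h) (fun h ↦ hued h)⟩

theorem IsRay.isCrosscut_fan (h : IsRay φ R a u e) (h' : IsRay φ R a u' e') :
    IsCrosscut φ R (seg a e ∪ seg a e') e e' where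
  subset_disc := union_subset h.subset_disc h'.subset_disc
  norm_left := h.norm_eq
  norm_right := h'.norm_eq
  joinedIn := ((joinedIn_seg a e).symm.mono subset_union_left).trans
    ((joinedIn_seg a e').mono subset_union_right)

theorem IsRay.isCrosscut_bridge (h : IsRay φ R a u e) (h' : IsRay φ R a u' e')
    (hd : seg u u' ⊆ chartDisc φ R) :
    IsCrosscut φ R (seg u e ∪ seg u u' ∪ seg u' e') e e' where
  subset_disc := union_subset (union_subset ((seg_subset_right h.mem).trans h.subset_disc) hd)
    ((seg_subset_right h'.mem).trans h'.subset_disc)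
  norm_left := h.norm_eq
  norm_right := h'.norm_eq
  joinedIn := (((joinedIn_seg u e).symm.mono (subset_union_left.trans subset_union_left)).trans
    ((joinedIn_seg u u').mono (subset_union_right.trans subset_union_left))).trans
    ((joinedIn_seg u' e').mono subset_union_right)

theorem notMem_seg_of_notMem_side (hg : g ∈ seg b c) (hx : x ∈ seg a g) (hb : b ∈ seg a e)
    (hxab : x ∉ seg a b) (hxbc : x ∉ seg b c) : x ∉ seg a e := fun h ↦
  (mem_seg_left_or_mem_seg_right hb h).elim hxab fun h ↦ hxbc <|
    seg_subset_left hg (mem_seg_right_of_mem_seg_left hx (mem_seg_left_of_mem_seg_right hb h))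

theorem IsRay.seg_inter_seg_nonempty {eb ec eg ey : S} (hg : g ∈ seg b c) (hx : x ∈ seg a g)
    (rb : IsRay φ R a b eb) (rc : IsRay φ R a c ec) (rg : IsRay φ R a g eg)
    (ry : IsRay φ R a y ey) (hbc : seg b c ⊆ chartDisc φ R) (hxy : seg x y ⊆ chartDisc φ R)
    (hdisj : Disjoint (seg x y) (seg a eb ∪ seg a ec)) : (seg a ey ∩ seg b c).Nonempty := by
  by_contra hempty
  have hmiss (z : S) (hz : z ∈ seg b c) : z ∉ seg a ey := fun h ↦ hempty ⟨z, h, hz⟩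
  have hxmiss := disjoint_left.1 hdisj (left_mem_seg x y)
  have hgb : g ∉ seg a eb := fun h ↦ hxmiss (.inl (seg_subset_left h hx))
  have hgc : g ∉ seg a ec := fun h ↦ hxmiss (.inr (seg_subset_left h hx))
  have d₁₂ : eb ≠ ec := by rintro rfl; exact hgb (segConvex_seg _ _ b rb.mem c rc.mem hg)
  have d₁₃ : eb ≠ eg := by rintro rfl; exact hgb rg.mem
  have d₁₄ : eb ≠ ey := by rintro rfl; exact hmiss b (left_mem_seg b c) rb.mem
  have d₂₃ : ec ≠ eg := by rintro rfl; exact hgc rg.mem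
  have d₂₄ : ec ≠ ey := by rintro rfl; exact hmiss c (right_mem_seg b c) rc.mem
  have d₃₄ : eg ≠ ey := by rintro rfl; exact hmiss g hg rg.mem
  have rx : IsRay φ R a x eg := ⟨seg_subset_left rg.mem hx, rg.norm_eq, rg.subset_disc⟩
  have hbg := seg_subset_left hg
  have hcg : seg c g ⊆ seg b c := seg_comm c b ▸ seg_subset_left (mem_seg_symm hg)
  rcases exists_crosscuts_inter_nonempty d₁₂ d₁₃ d₁₄ d₂₃ d₂₄ d₃₄
    (rb.isCrosscut_fan rc) (rx.isCrosscut_bridge ry hxy)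
    (rb.isCrosscut_bridge rg (hbg.trans hbc)) (rc.isCrosscut_fan ry)
    (rb.isCrosscut_fan ry) (rc.isCrosscut_bridge rg (hcg.trans hbc)) with h | h | h
  · obtain ⟨z, hz, hzxy⟩ := fan_inter_seg_nonempty_of_inter_bridge rx.mem ry.mem h
    exact disjoint_left.1 hdisj hzxy hz
  · rw [inter_comm] at h
    obtain ⟨z, hz | hz, hzbg⟩ := fan_inter_seg_nonempty_of_inter_bridge rb.mem rg.mem h
    · exact hgc (segConvex_seg _ _ z hz c rc.mem (mem_seg_right_of_mem_seg_left hg hzbg))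
    · exact hmiss z (hbg hzbg) hz
  · obtain ⟨z, hz | hz, hzcg⟩ := fan_inter_seg_nonempty_of_inter_bridge rc.mem rg.mem h
    · exact hgb (segConvex_seg _ _ z hz b rb.mem
        (mem_seg_right_of_mem_seg_left (mem_seg_symm hg) hzcg))
    · exact hmiss z (hcg hzcg) hz

end Rays

section ConvexHulls

variable {S : Type*} [MetricSpace S]

/-- The union of the segments joining the point `a` to the points of `C`. -/
def segJoin (a : S) (C : Set S) : Set S := ⋃ g ∈ C, seg a g

theorem mem_segJoin {a v : S} {C : Set S} : v ∈ segJoin a C ↔ ∃ g ∈ C, v ∈ seg a g := by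
  simp [segJoin]

theorem subset_segJoin (a : S) (C : Set S) : C ⊆ segJoin a C := fun g hg ↦
  mem_segJoin.2 ⟨g, hg, right_mem_seg a g⟩

variable [Fact (IsBusemannSpace S)] {a b c g v x : S} {C Q : Set S}

theorem isCompact_segJoin (a : S) (hC : IsCompact C) : IsCompact (segJoin a C) := by
  have h : segJoin a C = (fun p : S × ℝ ↦ geo a p.1 p.2) '' (C ×ˢ Icc (0 : ℝ) 1) := by
    ext v
    simp [mem_segJoin, seg_eq_image_geo, and_assoc]
  rw [h]
  exact (hC.prod isCompact_Icc).image (continuous_geo a)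

theorem segJoin_seg_mem_nhds (φ : S ≃ₜ ℂ) (hx : x ∈ segJoin a (seg b c)) (hxb : x ∉ seg a b)
    (hxc : x ∉ seg a c) (hxbc : x ∉ seg b c) : segJoin a (seg b c) ∈ 𝓝 x := by
  obtain ⟨R, hJR⟩ := exists_forall_norm_lt φ (isCompact_segJoin a (isCompact_seg b c))
  obtain ⟨g, hg, hxg⟩ := mem_segJoin.1 hx
  have hsegJ {u : S} (hu : u ∈ seg b c) : seg a u ⊆ segJoin a (seg b c) :=
    fun z hz ↦ mem_segJoin.2 ⟨u, hu, hz⟩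
  have hray {u : S} (hu : u ∈ seg b c) : ∃ e, IsRay φ R a u e :=
    exists_isRay fun z hz ↦ (hJR z (hsegJ hu hz)).le
  obtain ⟨eb, rb⟩ := hray (left_mem_seg b c)
  obtain ⟨ec, rc⟩ := hray (right_mem_seg b c)
  obtain ⟨eg, rg⟩ := hray hg
  have hxeb := notMem_seg_of_notMem_side hg hxg rb.mem hxb hxbc
  have hxec := notMem_seg_of_notMem_side (mem_seg_symm hg) hxg rc.mem hxc (seg_comm b c ▸ hxbc)
  have hnear_ax : ∀ᶠ y in 𝓝 x, seg a y ⊆ {s | ‖φ s‖ < R} ∩ (seg b c)ᶜ := by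
    refine eventually_seg_subset ((isOpen_setOf_norm_lt φ R).inter
      (isCompact_seg b c).isClosed.isOpen_compl) fun z hz ↦ ⟨?_, fun hzbc ↦ ?_⟩
    · exact hJR z (hsegJ hg (seg_subset_left hxg hz))
    · exact hxbc (segConvex_seg b c z hzbc g hg (mem_seg_right_of_mem_seg_left hxg hz))
  have hnear_xx : ∀ᶠ y in 𝓝 x, seg x y ⊆ {s | ‖φ s‖ < R} ∩ (seg a eb ∪ seg a ec)ᶜ := by
    refine eventually_seg_subset ((isOpen_setOf_norm_lt φ R).inter
      ((isCompact_seg a eb).union (isCompact_seg a ec)).isClosed.isOpen_compl) ?_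
    rw [seg_self, singleton_subset_iff]
    exact ⟨hJR x hx, not_or.2 ⟨hxeb, hxec⟩⟩
  filter_upwards [hnear_ax, hnear_xx] with y hay hxy
  obtain ⟨ey, ry⟩ := exists_isRay (φ := φ) fun z hz ↦ (show ‖φ z‖ < R from (hay hz).1).le
  obtain ⟨z, hzy, hzbc⟩ := IsRay.seg_inter_seg_nonempty hg hxg rb rc rg ry
    (fun z hz ↦ (hJR z (subset_segJoin _ _ hz)).le)
    (fun z hz ↦ (show ‖φ z‖ < R from (hxy hz).1).le) (disjoint_left.2 fun z hz ↦ (hxy hz).2)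
  rcases mem_seg_left_or_mem_seg_right ry.mem hzy with h | h
  · exact absurd hzbc (hay h).2
  · exact hsegJ hzbc (mem_seg_left_of_mem_seg_right ry.mem h)

-- Follow the geodesic from `b` through `v` until it leaves the triangle; it can only do so
-- through the side `[a, c]`.
theorem exists_mem_seg_mem_seg (φ : S ≃ₜ ℂ) (hg : g ∈ seg b c) (hv : v ∈ seg a g) :
    ∃ h ∈ seg a c, v ∈ seg b h := by
  by_cases hvab : v ∈ seg a b
  · exact ⟨a, left_mem_seg a c, mem_seg_symm hvab⟩
  by_cases hvbc : v ∈ seg b c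
  · exact ⟨c, right_mem_seg a c, hvbc⟩
  have hJ := isCompact_segJoin a (isCompact_seg b c)
  have hvJ : v ∈ segJoin a (seg b c) := mem_segJoin.2 ⟨g, hg, hv⟩
  obtain ⟨R, hJR⟩ := exists_forall_norm_lt φ hJ
  obtain ⟨e, he, hve, -⟩ := exists_norm_eq_mem_seg b (hJR v hvJ).le
  obtain ⟨z, ⟨hzJ, hzve⟩, hlast⟩ := exists_last_mem_seg hJ.isClosed ⟨v, hvJ, left_mem_seg v e⟩
  have hvbz : v ∈ seg b z := mem_seg_left_of_mem_seg_right hve hzve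
  refine ⟨z, ?_, hvbz⟩
  by_contra hzac
  have hzab : z ∉ seg a b := fun h ↦ hvab (segConvex_seg a b b (right_mem_seg a b) z h hvbz)
  have hzbc : z ∉ seg b c := fun h ↦ hvbc (seg_subset_left h hvbz)
  have hze : z ≠ e := by rintro rfl; exact (hJR z hzJ).ne he
  obtain ⟨w, hw, hwz, hzwJ⟩ := exists_ne_seg_subset_of_mem_nhds hze
    (segJoin_seg_mem_nhds φ hzJ hzab hzac hzbc)
  exact hwz (hlast w (hzwJ (right_mem_seg z w)) hw)

theorem segConvex_segJoin (φ : S ≃ₜ ℂ) (a : S) (hC : SegConvex seg C) :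
    SegConvex seg (segJoin a C) := by
  intro x hx y hy v hv
  obtain ⟨p, hp, hxp⟩ := mem_segJoin.1 hx
  obtain ⟨q, hq, hyq⟩ := mem_segJoin.1 hy
  obtain ⟨h, hh, hvh⟩ := exists_mem_seg_mem_seg φ hyq hv
  obtain ⟨k, hk, hhk⟩ := exists_mem_seg_mem_seg φ hxp (mem_seg_symm hh)
  exact mem_segJoin.2 ⟨k, hC q hq p hp hk, seg_subset_left hhk hvh⟩

theorem exists_isCompact_segConvex_superset (φ : S ≃ₜ ℂ) (hQ : Q.Finite) :
    ∃ K : Set S, IsCompact K ∧ SegConvex seg K ∧ Q ⊆ K := by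
  induction Q, hQ using Set.Finite.induction_on with
  | empty => exact ⟨∅, isCompact_empty, fun _ h ↦ h.elim, Subset.rfl⟩
  | @insert z Q _ _ ih =>
    obtain ⟨K, hK, hconv, hQK⟩ := ih
    rcases K.eq_empty_or_nonempty with rfl | ⟨o, ho⟩
    · refine ⟨{z}, isCompact_singleton, ?_, by simp [subset_empty_iff.1 hQK]⟩
      rintro _ rfl _ rfl
      rw [seg_self]
    · refine ⟨segJoin z K, isCompact_segJoin z hK, segConvex_segJoin φ z hconv,
        insert_subset ?_ (hQK.trans (subset_segJoin z K))⟩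
      exact mem_segJoin.2 ⟨o, ho, left_mem_seg z o⟩

end ConvexHulls

section RaySystems

variable {ι S : Type*} [MetricSpace S] {φ : S ≃ₜ ℂ} {K : Set S} {R : ℝ} {X E : ι → S}
  {a b c d e x : S}

/-- The geodesics `[X k, E k]` run in the disc `chartDisc φ R` from their foot `X k` in the convex
set `K` to the boundary circle, meet `K` only at their feet, and meet each other only if their feet
coincide. -/
structure IsRaySystem (φ : S ≃ₜ ℂ) (K : Set S) (R : ℝ) (X E : ι → S) : Prop where
  convex : SegConvex seg K
  subset_disc : K ⊆ chartDisc φ R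
  foot_mem k : X k ∈ K
  norm_eq k : ‖φ (E k)‖ = R
  ray_subset_disc k : seg (X k) (E k) ⊆ chartDisc φ R
  eq_foot {k z} : z ∈ seg (X k) (E k) → z ∈ K → z = X k
  foot_eq_foot {k l} : (seg (X k) (E k) ∩ seg (X l) (E l)).Nonempty → X k = X l

/-- The order in which four points are seen around `K`: a broken geodesic from `a` to `c` with its
corner in `K` meets every such broken geodesic from `b` to `d`. -/
def Interlaced (K : Set S) (a b c d : S) : Prop :=
  ∀ x ∈ K, ∀ y ∈ K, ((seg a x ∪ seg x c) ∩ (seg b y ∪ seg y d)).Nonempty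

theorem Interlaced.rotate (h : Interlaced K a b c d) : Interlaced K b c d a := by
  intro x hx y hy
  have := h y hy x hx
  rwa [inter_comm, union_comm (seg a y), seg_comm a, seg_comm y] at this

theorem interlaced_self (K : Set S) (a c d : S) : Interlaced K a a c d := fun x _ y _ ↦
  ⟨a, .inl (left_mem_seg a x), .inl (left_mem_seg a y)⟩

theorem exists_extension_maximal_meeting [Finite ι] (o v : ι → S) :
    ∃ E : ι → S, (∀ k, v k ∈ seg (o k) (E k)) ∧
      ∀ E' : ι → S, (∀ k, E k ∈ seg (o k) (E' k)) → ∀ k l,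
        (seg (v k) (E' k) ∩ seg (v l) (E' l)).Nonempty →
          (seg (v k) (E k) ∩ seg (v l) (E l)).Nonempty := by
  let meeting (E : ι → S) : Set (ι × ι) :=
    {p | (seg (v p.1) (E p.1) ∩ seg (v p.2) (E p.2)).Nonempty}
  obtain ⟨E, hE, hmax⟩ := Set.Finite.exists_maximalFor' meeting
    {E | ∀ k, v k ∈ seg (o k) (E k)} (toFinite _) ⟨v, fun k ↦ right_mem_seg _ _⟩
  refine ⟨E, hE, fun E' hE' k l hkl ↦ ?_⟩
  have hsub (k : ι) : seg (v k) (E k) ⊆ seg (v k) (E' k) :=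
    seg_subset_left (mem_seg_right_of_mem_seg_left (hE' k) (hE k))
  exact hmax (fun k ↦ seg_subset_left (hE' k) (hE k))
    (fun p h ↦ h.mono (inter_subset_inter (hsub p.1) (hsub p.2)))
    (show (k, l) ∈ meeting E' from hkl)

variable [Fact (IsBusemannSpace S)]

theorem exists_exit_ray (hK : IsCompact K) (o : S) (he : e ∈ K) (heR : ‖φ e‖ ≤ R) :
    ∃ x f, e ∈ seg o f ∧ x ∈ K ∧ x ∈ seg e f ∧ ‖φ f‖ = R ∧ seg x f ⊆ chartDisc φ R ∧
      ∀ z ∈ K, z ∈ seg x f → z = x := by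
  obtain ⟨f, hf, hef, hdisc⟩ := exists_norm_eq_mem_seg o heR
  obtain ⟨x, ⟨hxK, hx⟩, hlast⟩ := exists_last_mem_seg hK.isClosed ⟨e, he, left_mem_seg e f⟩
  exact ⟨x, f, hef, hxK, hx, hf, (seg_subset_right hx).trans hdisc, hlast⟩

-- `K` contains extensions so long that extending them further creates no new meeting. Two rays
-- meeting outside `K` therefore already met inside `K`, so they leave `K` at the same point.
theorem exists_isRaySystem (φ : S ≃ₜ ℂ) [Finite ι] (o v : ι → S) :
    ∃ (K : Set S) (R : ℝ) (X E : ι → S), IsRaySystem φ K R X E ∧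
      ∀ k, v k ∈ seg (o k) (X k) := by
  obtain ⟨E, hvE, hmax⟩ := exists_extension_maximal_meeting o v
  obtain ⟨K, hK, hconv, hsub⟩ := exists_isCompact_segConvex_superset φ (finite_range E)
  obtain ⟨R, hKR⟩ := exists_forall_norm_lt φ hK
  have hEK (k : ι) : E k ∈ K := hsub ⟨k, rfl⟩
  choose X F hEF hXK hX hF hdisc hfoot using fun k ↦
    exists_exit_ray (φ := φ) hK (o k) (hEK k) (hKR _ (hEK k)).le
  have hXF (k : ι) : X k ∈ seg (o k) (F k) := seg_subset_right (hEF k) (hX k)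
  have hEX (k : ι) : E k ∈ seg (o k) (X k) := mem_seg_left_of_mem_seg_right (hEF k) (hX k)
  have hvX (k : ι) : v k ∈ seg (o k) (X k) := seg_subset_left (hEX k) (hvE k)
  have hXv (k : ι) : X k ∈ seg (v k) (F k) := mem_seg_right_of_mem_seg_left (hXF k) (hvX k)
  refine ⟨K, R, X, F, ⟨hconv, fun z hz ↦ (hKR z hz).le, hXK, hF, hdisc,
    fun hz hzK ↦ hfoot _ _ hzK hz, ?_⟩, hvX⟩
  rintro k l ⟨z, hzk, hzl⟩
  obtain ⟨w, hwk, hwl⟩ :=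
    hmax F hEF k l ⟨z, seg_subset_right (hXv k) hzk, seg_subset_right (hXv l) hzl⟩
  have hX_between {m : ι} (hz : z ∈ seg (X m) (F m)) (hw : w ∈ seg (v m) (E m)) :
      X m ∈ seg w z :=
    mem_seg_right_of_mem_seg_left (mem_seg_left_of_mem_seg_right (hXv m) hz)
      (seg_subset_left (mem_seg_right_of_mem_seg_left (hEX m) (hvE m)) hw)
  have hk := hX_between hzk hwk
  rcases mem_seg_left_or_mem_seg_right hk (hX_between hzl hwl) with h | h
  · exact hfoot l _ (hXK k) (seg_subset_left hzl (mem_seg_right_of_mem_seg_left hk h))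
  · exact (hfoot k _ (hXK l) (seg_subset_left hzk h)).symm

theorem IsRaySystem.isCrosscut (h : IsRaySystem φ K R X E) (hx : x ∈ K) (k l : ι) :
    IsCrosscut φ R (seg (X k) (E k) ∪ (seg (X k) x ∪ seg x (X l)) ∪ seg (X l) (E l))
      (E k) (E l) where
  subset_disc := union_subset (union_subset (h.ray_subset_disc k) (union_subset
    ((h.convex _ (h.foot_mem k) _ hx).trans h.subset_disc)
    ((h.convex _ hx _ (h.foot_mem l)).trans h.subset_disc))) (h.ray_subset_disc l)
  norm_left := h.norm_eq k
  norm_right := h.norm_eq l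
  joinedIn := ((((joinedIn_seg _ _).symm.mono subset_union_left).trans
    ((((joinedIn_seg _ x).mono subset_union_left).trans
      ((joinedIn_seg x _).mono subset_union_right)).mono subset_union_right)).mono
        subset_union_left).trans ((joinedIn_seg _ _).mono subset_union_right)

theorem IsRaySystem.interlaced (h : IsRaySystem φ K R X E) {i j k l : ι}
    (hij : (φ (E i)).arg < (φ (E j)).arg) (hjk : (φ (E j)).arg < (φ (E k)).arg)
    (hkl : (φ (E k)).arg < (φ (E l)).arg) : Interlaced K (X i) (X j) (X k) (X l) := by
  intro x hx y hy
  have sub {u v w : S} (hu : u ∈ K) (hv : v ∈ K) (hw : w ∈ K) : seg u v ∪ seg v w ⊆ K :=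
    union_subset (h.convex _ hu _ hv) (h.convex _ hv _ hw)
  have hA := sub (h.foot_mem i) hx (h.foot_mem k)
  have hB := sub (h.foot_mem j) hy (h.foot_mem l)
  have mi : X i ∈ seg (X i) x ∪ seg x (X k) := .inl (left_mem_seg _ _)
  have mk : X k ∈ seg (X i) x ∪ seg x (X k) := .inr (right_mem_seg _ _)
  have mj : X j ∈ seg (X j) y ∪ seg y (X l) := .inl (left_mem_seg _ _)
  have ml : X l ∈ seg (X j) y ∪ seg y (X l) := .inr (right_mem_seg _ _)
  obtain ⟨z, (hi | hz) | hk, (hj | hz') | hl⟩ :=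
    (h.isCrosscut hx i k).inter_nonempty_of_arg_lt (h.isCrosscut hy j l) hij hjk hkl
  · exact ⟨X i, mi, h.foot_eq_foot ⟨z, hi, hj⟩ ▸ mj⟩
  · exact ⟨X i, mi, h.eq_foot hi (hB hz') ▸ hz'⟩
  · exact ⟨X i, mi, h.foot_eq_foot ⟨z, hi, hl⟩ ▸ ml⟩
  · exact ⟨X j, h.eq_foot hj (hA hz) ▸ hz, mj⟩
  · exact ⟨z, hz, hz'⟩
  · exact ⟨X l, h.eq_foot hl (hA hz) ▸ hz, ml⟩
  · exact ⟨X k, mk, h.foot_eq_foot ⟨z, hk, hj⟩ ▸ mj⟩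
  · exact ⟨X k, mk, h.eq_foot hk (hB hz') ▸ hz'⟩
  · exact ⟨X k, mk, h.foot_eq_foot ⟨z, hk, hl⟩ ▸ ml⟩

end RaySystems

section Cycles

theorem exists_cyclic_enumeration {ι α : Type*} [Finite ι] [Nonempty ι] [LinearOrder α]
    (f : ι → α) : ∃ (n : ℕ) (κ : ℕ → ι), κ n = κ 0 ∧ StrictMonoOn (f ∘ κ) (Iio n) ∧
      ∀ k, ∃ i < n, f (κ i) = f k := by
  classical
  have hfin : (range f).Finite := finite_range f
  set T := hfin.toFinset with hT
  have hpos : 0 < T.card := Finset.card_pos.2 (hfin.toFinset_nonempty.2 (range_nonempty f))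
  have hpre (i : Fin T.card) : ∃ k, f k = T.orderEmbOfFin rfl i :=
    hfin.mem_toFinset.1 (T.orderEmbOfFin_mem rfl i)
  choose g hg using hpre
  let κ (i : ℕ) : ι := if h : i < T.card then g ⟨i, h⟩ else g ⟨0, hpos⟩
  have hκ {i : ℕ} (hi : i < T.card) : f (κ i) = T.orderEmbOfFin rfl ⟨i, hi⟩ := by
    simp only [κ, dif_pos hi, hg]
  refine ⟨T.card, κ, by simp [κ, hpos], fun i hi j hj hij ↦ ?_, fun k ↦ ?_⟩
  · simpa only [Function.comp_apply, hκ hi, hκ hj] using (T.orderEmbOfFin rfl).strictMono hij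
  · obtain ⟨i, hi⟩ : f k ∈ range (T.orderEmbOfFin rfl) := by
      rw [Finset.range_orderEmbOfFin, hT, hfin.coe_toFinset]
      exact ⟨k, rfl⟩
    exact ⟨i, i.2, (hκ i.2).trans hi⟩

variable {S : Type*} [MetricSpace S] {K Q : Set S}

/-- The points `p 0, p 1, …, p n = p 0` of the convex set `K` are listed in the cyclic order in
which they are seen around `K`. -/
structure IsInterlacedCycle (K : Set S) (n : ℕ) (p : ℕ → S) : Prop where
  convex : SegConvex seg K
  mem i : p i ∈ K
  closed : p n = p 0
  interlaced {i j k l} : i ≤ j → j ≤ k → k ≤ l → l ≤ n → Interlaced K (p i) (p j) (p k) (p l)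

variable [Fact (IsBusemannSpace S)] {ι : Type*} {φ : S ≃ₜ ℂ} {R : ℝ} {X E : ι → S}

theorem IsRaySystem.isInterlacedCycle (h : IsRaySystem φ K R X E) {n : ℕ} {κ : ℕ → ι}
    (hn : κ n = κ 0) (hκ : StrictMonoOn (fun i ↦ (φ (E (κ i))).arg) (Iio n)) :
    IsInterlacedCycle K n (X ∘ κ) where
  convex := h.convex
  mem i := h.foot_mem _
  closed := congrArg X hn
  interlaced {i j k l} hij hjk hkl hl := by
    simp only [Function.comp_apply]
    rcases hij.eq_or_lt with rfl | hij
    · exact interlaced_self _ _ _ _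
    rcases hjk.eq_or_lt with rfl | hjk
    · exact (interlaced_self _ _ _ _).rotate.rotate.rotate
    rcases hkl.eq_or_lt with rfl | hkl
    · exact (interlaced_self _ _ _ _).rotate.rotate
    have hk : k < n := hkl.trans_le hl
    have hj : j < n := hjk.trans hk
    have hi : i < n := hij.trans hj
    rcases hl.eq_or_lt with rfl | hl
    · rw [hn]
      rcases i.eq_zero_or_pos with rfl | hi₀
      · exact (interlaced_self _ _ _ _).rotate
      · exact (h.interlaced (hκ (hi₀.trans hi) hi hi₀) (hκ hi hj hij) (hκ hj hk hjk)).rotate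
    · exact h.interlaced (hκ hi hj hij) (hκ hj hk hjk) (hκ hk hl hkl)

theorem exists_isInterlacedCycle (φ : S ≃ₜ ℂ) (hQ : Q.Finite) (hne : Q.Nonempty) :
    ∃ (K : Set S) (n : ℕ) (p : ℕ → S), IsInterlacedCycle K n p ∧
      ∀ q ∈ Q, ∀ q' ∈ Q, q ≠ q' →
        ∃ a b, a < b ∧ b < n ∧ q ∈ seg (p a) (p b) ∧ q' ∈ seg (p a) (p b) := by
  have := hQ.to_subtype
  have := hne.to_subtype
  obtain ⟨K, R, X, E, hsys, hext⟩ := exists_isRaySystem φ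
    (fun k : Q × Q ↦ (k.1 : S)) (fun k ↦ (k.2 : S))
  obtain ⟨n, κ, hn, hκ, hsurj⟩ := exists_cyclic_enumeration fun k ↦ (φ (E k)).arg
  refine ⟨K, n, X ∘ κ, hsys.isInterlacedCycle hn hκ, fun q hq q' hq' hqq' ↦ ?_⟩
  have foot (k : Q × Q) : ∃ i < n, X (κ i) = X k := by
    obtain ⟨i, hi, harg⟩ := hsurj k
    have hE := eq_of_norm_eq_of_arg_eq (hsys.norm_eq _) (hsys.norm_eq _) harg
    exact ⟨i, hi, hsys.foot_eq_foot ⟨E k, hE ▸ right_mem_seg _ _, right_mem_seg _ _⟩⟩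
  obtain ⟨a, ha, hXa⟩ := foot (⟨q', hq'⟩, ⟨q, hq⟩)
  obtain ⟨b, hb, hXb⟩ := foot (⟨q, hq⟩, ⟨q', hq'⟩)
  have hqa : q ∈ seg (X (κ a)) q' := hXa ▸ mem_seg_symm (hext (⟨q', hq'⟩, ⟨q, hq⟩))
  have hqb : q' ∈ seg q (X (κ b)) := hXb ▸ hext (⟨q, hq⟩, ⟨q', hq'⟩)
  have hq'ab : q' ∈ seg (X (κ a)) (X (κ b)) := mem_seg_of_overlap hqa hqb hqq'
  have hqab : q ∈ seg (X (κ a)) (X (κ b)) := seg_subset_left hq'ab hqa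
  rcases lt_trichotomy a b with hab | rfl | hba
  · exact ⟨a, b, hab, hb, hqab, hq'ab⟩
  · rw [seg_self] at hqab hq'ab
    exact absurd (hqab.trans hq'ab.symm) hqq'
  · exact ⟨b, a, hba, ha, mem_seg_symm hqab, mem_seg_symm hq'ab⟩

end Cycles

section Switching

variable {α : Type*} [LinearOrder α] {f g f₀₀ f₀₁ f₁₀ f₁₁ g₀₀ g₀₁ g₁₀ g₁₁ : α → ℝ}
  {τ t₀₀ t₀₁ t₁₀ t₁₁ : α} {c : ℝ}

/-- `f` is switched on at time `τ`: it vanishes before `τ` and agrees with `g` after `τ`. -/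
structure SwitchesAt (f g : α → ℝ) (τ : α) : Prop where
  before {t} : t ≤ τ → f t = 0
  after {t} : τ ≤ t → f t = g t

theorem monotone_mixed_difference_of_le (h₀₀ : SwitchesAt f₀₀ g₀₀ t₀₀)
    (h₀₁ : SwitchesAt f₀₁ g₀₁ t₀₁) (h₁₀ : SwitchesAt f₁₀ g₁₀ t₁₀) (h₁₁ : SwitchesAt f₁₁ g₁₁ t₁₁)
    (le₁ : t₀₀ ≤ t₀₁) (le₂ : t₀₁ ≤ t₁₀) (le₃ : t₁₀ ≤ t₁₁) (mono : MonotoneOn g₀₀ (Ici t₀₀))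
    (mono_sub : Monotone fun t ↦ g₀₀ t - g₀₁ t) (anti : AntitoneOn g₁₁ (Iic t₁₁))
    (const : ∀ t, g₀₀ t + g₁₁ t - g₀₁ t - g₁₀ t = c) :
    Monotone fun t ↦ f₀₀ t + f₁₁ t - f₀₁ t - f₁₀ t := by
  set F : α → ℝ := fun t ↦ f₀₀ t + f₁₁ t - f₀₁ t - f₁₀ t with hF
  have piece₁ : MonotoneOn F (Iic t₀₀) :=
    (monotoneOn_const (c := (0 : ℝ))).congr fun t (ht : t ≤ t₀₀) ↦ by
      simp only [hF, h₀₀.before ht, h₀₁.before (ht.trans le₁), h₁₀.before (show t ≤ t₁₀ by order),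
        h₁₁.before (show t ≤ t₁₁ by order)]
      ring
  have piece₂ : MonotoneOn F (Icc t₀₀ t₀₁) :=
    (mono.mono Icc_subset_Ici_self).congr fun t ⟨hl, hr⟩ ↦ by
      simp only [hF, h₀₀.after hl, h₀₁.before hr, h₁₀.before (hr.trans le₂),
        h₁₁.before (show t ≤ t₁₁ by order)]
      ring
  have piece₃ : MonotoneOn F (Icc t₀₁ t₁₀) :=
    (mono_sub.monotoneOn _).congr fun t ⟨hl, hr⟩ ↦ by
      simp only [hF, h₀₀.after (le₁.trans hl), h₀₁.after hl, h₁₀.before hr,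
        h₁₁.before (hr.trans le₃)]
      ring
  have piece₄ : MonotoneOn F (Icc t₁₀ t₁₁) :=
    ((anti.mono Icc_subset_Iic_self).neg.const_add c).congr fun t ⟨hl, hr⟩ ↦ by
      simp only [hF, h₀₀.after (show t₀₀ ≤ t by order), h₀₁.after (le₂.trans hl), h₁₀.after hl,
        h₁₁.before hr]
      linarith [const t]
  have piece₅ : MonotoneOn F (Ici t₁₁) :=
    (monotoneOn_const (c := c)).congr fun t (ht : t₁₁ ≤ t) ↦ by
      simp only [hF, h₀₀.after (show t₀₀ ≤ t by order), h₀₁.after (show t₀₁ ≤ t by order),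
        h₁₀.after (le₃.trans ht), h₁₁.after ht, const t]
  have glue {s t : α} (hst : s ≤ t) (hs : MonotoneOn F (Iic s)) (ht : MonotoneOn F (Icc s t)) :
      MonotoneOn F (Iic t) :=
    Iic_union_Icc_eq_Iic hst ▸ hs.union_right ht isGreatest_Iic (isLeast_Icc hst)
  exact (glue le₃ (glue le₂ (glue le₁ piece₁ piece₂) piece₃) piece₄).Iic_union_Ici piece₅

theorem monotone_mixed_difference (h₀₀ : SwitchesAt f₀₀ g₀₀ t₀₀)
    (h₀₁ : SwitchesAt f₀₁ g₀₁ t₀₁) (h₁₀ : SwitchesAt f₁₀ g₁₀ t₁₀) (h₁₁ : SwitchesAt f₁₁ g₁₁ t₁₁)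
    (le₀₁ : t₀₀ ≤ t₀₁) (le₁₀ : t₀₀ ≤ t₁₀) (le₀₁' : t₀₁ ≤ t₁₁) (le₁₀' : t₁₀ ≤ t₁₁)
    (mono : MonotoneOn g₀₀ (Ici t₀₀)) (mono₀₁ : Monotone fun t ↦ g₀₀ t - g₀₁ t)
    (mono₁₀ : Monotone fun t ↦ g₀₀ t - g₁₀ t) (anti : AntitoneOn g₁₁ (Iic t₁₁))
    (const : ∀ t, g₀₀ t + g₁₁ t - g₀₁ t - g₁₀ t = c) :
    Monotone fun t ↦ f₀₀ t + f₁₁ t - f₀₁ t - f₁₀ t := by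
  rcases le_total t₀₁ t₁₀ with h | h
  · exact monotone_mixed_difference_of_le h₀₀ h₀₁ h₁₀ h₁₁ le₀₁ h le₁₀' mono mono₀₁ anti const
  · simp only [sub_right_comm _ (f₀₁ _)]
    exact monotone_mixed_difference_of_le h₀₀ h₁₀ h₀₁ h₁₁ le₁₀ h le₀₁' mono mono₁₀ anti
      fun t ↦ by rw [sub_right_comm, const t]

end Switching

section GromovProducts

variable {S : Type*} [MetricSpace S] {K : Set S} {a a' b b' c d d' w x y z : S} {f : S → ℝ}

/-- The Gromov product of `a` and `b` seen from `z`, that is, half the excess of the detour through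
`z` on the way from `a` to `b`. -/
noncomputable def gromovProduct (z a b : S) : ℝ := (dist z a + dist z b - dist a b) / 2

theorem gromovProduct_eq_zero (h : z ∈ seg a b) : gromovProduct z a b = 0 := by
  rw [gromovProduct, ← mem_seg.1 h, dist_comm z a]
  ring

/-- Along the chord `[x, y]` the function `f` vanishes up to the crossing with `[a, b]` and is the
Gromov product of `a` and `b` from there on. -/
structure IsSwitchedProduct (x y a b : S) (f : S → ℝ) : Prop where
  eq_zero {z o} : z ∈ seg x y → o ∈ seg a b → o ∈ seg z y → f z = 0
  eq_gromovProduct {z o} : z ∈ seg x y → o ∈ seg a b → o ∈ seg x z → f z = gromovProduct z a b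

/-- The points `x, a, a', y, b', b` are listed in the cyclic order in which they are seen around
`K`, so that the chord `[x, y]` separates `a, a'` from `b, b'`. -/
structure IsInterlacedHexagon (K : Set S) (x a a' y b' b : S) : Prop where
  chord_subset : seg x y ⊆ K
  x_y_b'_b : Interlaced K x y b' b
  x_a_a'_y : Interlaced K x a a' y
  a_y_b'_b : Interlaced K a y b' b
  a'_y_b'_b : Interlaced K a' y b' b
  a_a'_y_b : Interlaced K a a' y b
  a_a'_y_b' : Interlaced K a a' y b'
  meet_a_b : (seg a b ∩ seg x y).Nonempty
  meet_a_b' : (seg a b' ∩ seg x y).Nonempty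
  meet_a'_b : (seg a' b ∩ seg x y).Nonempty
  meet_a'_b' : (seg a' b' ∩ seg x y).Nonempty

theorem Interlaced.reverse (h : Interlaced K a b c d) : Interlaced K d c b a := by
  intro x hx y hy
  have := h y hy x hx
  rwa [inter_comm, union_comm, union_comm (seg a y), seg_comm a, seg_comm y, seg_comm b,
    seg_comm x] at this

-- If the crossing point `v` lies on both `[z, b']` and `[w, b]`, this is the quadrangle inequality
-- for `z, w, b', b`; otherwise the broken geodesics overlap on the chord.
theorem dist_sub_dist_le (hw : w ∈ seg x y) (hz : z ∈ seg x w)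
    (h : ((seg x z ∪ seg z b') ∩ (seg y w ∪ seg w b)).Nonempty) :
    dist z b - dist z b' ≤ dist w b - dist w b' := by
  have quadrangle {v : S} (hv : v ∈ seg z b') (hv' : v ∈ seg w b) :
      dist z b - dist z b' ≤ dist w b - dist w b' := by
    linarith [mem_seg.1 hv, mem_seg.1 hv', dist_triangle z v b, dist_triangle w v b']
  obtain ⟨v, hv | hv, hv' | hv'⟩ := h
  · have hwv : w ∈ seg v y := mem_seg_right_of_mem_seg_left hw (seg_subset_left hz hv)
    have heq : w = v := dist_le_zero.1 <| by
      linarith [mem_seg.1 hwv, mem_seg.1 (mem_seg_symm hv'), dist_comm w v]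
    have hzw := mem_seg_right_of_mem_seg_left hz hv
    rw [← heq, seg_self] at hzw
    rw [hzw]
  · exact quadrangle (left_mem_seg z b')
      (seg_subset_left hv' (mem_seg_symm (mem_seg_right_of_mem_seg_left hz hv)))
  · exact quadrangle (seg_subset_left hv (mem_seg_left_of_mem_seg_right
      (mem_seg_right_of_mem_seg_left hw hz) (mem_seg_symm hv'))) (left_mem_seg w b)
  · exact quadrangle hv hv'

variable [Fact (IsBusemannSpace S)]

theorem gromovProduct_le_gromovProduct (hw : w ∈ seg a b) (hz : z ∈ seg w y) :
    gromovProduct z a b ≤ gromovProduct y a b := by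
  suffices dist a z + dist b z ≤ dist a y + dist b y by
    simp only [gromovProduct]
    linarith [dist_comm a z, dist_comm b z, dist_comm a y, dist_comm b y]
  rcases eq_or_ne w y with rfl | hwy
  · rw [seg_self] at hz
    rw [hz]
  refine le_of_mul_le_mul_left ?_ (dist_pos.2 hwy)
  have hmin : dist a w + dist b w ≤ dist a y + dist b y := by
    rw [dist_comm b w, mem_seg.1 hw, dist_comm b y]
    exact dist_triangle a y b
  calc dist w y * (dist a z + dist b z)
      ≤ dist z y * (dist a w + dist b w) + dist w z * (dist a y + dist b y) := by
        linarith [dist_mul_dist_le_of_mem_seg a hz, dist_mul_dist_le_of_mem_seg b hz]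
    _ ≤ dist z y * (dist a y + dist b y) + dist w z * (dist a y + dist b y) := by gcongr
    _ = dist w y * (dist a y + dist b y) := by rw [← mem_seg.1 hz]; ring

theorem geo_mem_seg_geo_geo (x y : S) {r s t : ℝ} (hrs : r ≤ s) (hst : s ≤ t) :
    geo x y s ∈ seg (geo x y r) (geo x y t) :=
  mem_seg_right_of_mem_seg_left (geo_mem_seg_geo x y hst) (geo_mem_seg_geo x y hrs)

theorem geo_mem_seg_geo_right (x y : S) {s t : ℝ} (hst : s ≤ t) :
    geo x y t ∈ seg (geo x y s) y :=
  mem_seg_right_of_mem_seg_left (geo_mem_seg x y t) (geo_mem_seg_geo x y hst)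

theorem monotoneOn_gromovProduct_geo {τ : ℝ} (h : geo x y τ ∈ seg a b) :
    MonotoneOn (fun t ↦ gromovProduct (geo x y t) a b) (Ici τ) := fun _ hs _ _ hst ↦
  gromovProduct_le_gromovProduct h (geo_mem_seg_geo_geo x y hs hst)

theorem antitoneOn_gromovProduct_geo {τ : ℝ} (h : geo x y τ ∈ seg a b) :
    AntitoneOn (fun t ↦ gromovProduct (geo x y t) a b) (Iic τ) := fun _ _ _ ht hst ↦
  gromovProduct_le_gromovProduct h (mem_seg_symm (geo_mem_seg_geo_geo x y hst ht))

theorem Interlaced.monotone_dist_sub_dist (h : Interlaced K x y b' b) (hK : seg x y ⊆ K) :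
    Monotone fun t ↦ dist (geo x y t) b - dist (geo x y t) b' := fun s t hst ↦
  dist_sub_dist_le (geo_mem_seg x y t) (geo_mem_seg_geo x y hst)
    (h _ (hK (geo_mem_seg x y s)) _ (hK (geo_mem_seg x y t)))

theorem Interlaced.geo_max_mem_seg (h : Interlaced K c y d' d) (hK : seg x y ⊆ K) {s t : ℝ}
    (hs : geo x y s ∈ seg c d') (ht : geo x y t ∈ seg c d) : geo x y (max s t) ∈ seg c d' := by
  rcases le_total t s with hts | hst
  · rwa [max_eq_left hts]
  rw [max_eq_right hst]
  obtain ⟨v, hv, hv'⟩ := h _ (hK (geo_mem_seg x y s)) _ (hK (geo_mem_seg x y t))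
  have hvc : v ∈ seg c d' := hv.elim (fun h ↦ seg_subset_left hs h) fun h ↦ seg_subset_right hs h
  rcases hv' with hvy | hvd
  · exact segConvex_seg c d' _ hs _ hvc
      (mem_seg_left_of_mem_seg_right (geo_mem_seg_geo_right x y hst) (mem_seg_symm hvy))
  · exact seg_subset_left hvc (mem_seg_left_of_mem_seg_right ht hvd)

theorem IsInterlacedHexagon.exists_crossing_times (h : IsInterlacedHexagon K x a a' y b' b) :
    ∃ t₀₀ t₀₁ t₁₀ t₁₁ : ℝ, (t₀₀ ≤ t₀₁ ∧ t₀₀ ≤ t₁₀ ∧ t₀₁ ≤ t₁₁ ∧ t₁₀ ≤ t₁₁) ∧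
      geo x y t₀₀ ∈ seg a b ∧ geo x y t₀₁ ∈ seg a b' ∧ geo x y t₁₀ ∈ seg a' b ∧
        geo x y t₁₁ ∈ seg a' b' := by
  have hK := h.chord_subset
  have time {c d : S} (hcd : (seg c d ∩ seg x y).Nonempty) : ∃ t, geo x y t ∈ seg c d := by
    obtain ⟨z, hz, hxy⟩ := hcd
    obtain ⟨t, -, rfl⟩ := (seg_eq_image_geo x y).subset hxy
    exact ⟨t, hz⟩
  obtain ⟨t₀₀, h₀₀⟩ := time h.meet_a_b
  obtain ⟨s₀₁, h₀₁⟩ := time h.meet_a_b'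
  obtain ⟨s₁₀, h₁₀⟩ := time h.meet_a'_b
  obtain ⟨s₁₁, h₁₁⟩ := time h.meet_a'_b'
  replace h₀₁ := h.a_y_b'_b.geo_max_mem_seg hK h₀₁ h₀₀
  replace h₁₀ := h.a_a'_y_b.reverse.geo_max_mem_seg hK (mem_seg_symm h₁₀) (mem_seg_symm h₀₀)
  replace h₁₁ := h.a_a'_y_b'.reverse.geo_max_mem_seg hK (mem_seg_symm h₁₁) (mem_seg_symm h₀₁)
  replace h₁₁ := h.a'_y_b'_b.geo_max_mem_seg hK (mem_seg_symm h₁₁) (mem_seg_symm h₁₀)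
  exact ⟨_, _, _, _, ⟨le_max_right _ _, le_max_right _ _,
    (le_max_right _ _).trans (le_max_left _ _), le_max_right _ _⟩, h₀₀, h₀₁, mem_seg_symm h₁₀, h₁₁⟩

theorem IsSwitchedProduct.switchesAt (h : IsSwitchedProduct x y a b f) {τ : ℝ}
    (hτ : geo x y τ ∈ seg a b) :
    SwitchesAt (fun t ↦ f (geo x y t)) (fun t ↦ gromovProduct (geo x y t) a b) τ where
  before ht := h.eq_zero (geo_mem_seg x y _) hτ (geo_mem_seg_geo_right x y ht)
  after ht := h.eq_gromovProduct (geo_mem_seg x y _) hτ (geo_mem_seg_geo x y ht)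

theorem IsInterlacedHexagon.monotone_mixed_difference (h : IsInterlacedHexagon K x a a' y b' b)
    {f₀₀ f₀₁ f₁₀ f₁₁ : S → ℝ} (h₀₀ : IsSwitchedProduct x y a b f₀₀)
    (h₀₁ : IsSwitchedProduct x y a b' f₀₁) (h₁₀ : IsSwitchedProduct x y a' b f₁₀)
    (h₁₁ : IsSwitchedProduct x y a' b' f₁₁) :
    Monotone fun t ↦ f₀₀ (geo x y t) + f₁₁ (geo x y t) - f₀₁ (geo x y t) - f₁₀ (geo x y t) := by
  obtain ⟨t₀₀, t₀₁, t₁₀, t₁₁, ⟨le₀₁, le₁₀, le₀₁', le₁₀'⟩, m₀₀, m₀₁, m₁₀, m₁₁⟩ :=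
    h.exists_crossing_times
  refine BusemannSurface.monotone_mixed_difference (h₀₀.switchesAt m₀₀) (h₀₁.switchesAt m₀₁)
    (h₁₀.switchesAt m₁₀) (h₁₁.switchesAt m₁₁) le₀₁ le₁₀ le₀₁' le₁₀'
    (monotoneOn_gromovProduct_geo m₀₀) ?_ ?_ (antitoneOn_gromovProduct_geo m₁₁)
    (c := (dist a b' + dist a' b - dist a b - dist a' b') / 2) fun t ↦ ?_
  · intro s t hst
    have := h.x_y_b'_b.monotone_dist_sub_dist h.chord_subset hst
    simp only [gromovProduct]
    linarith
  · intro s t hst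
    have := h.x_a_a'_y.reverse.rotate.rotate.rotate.monotone_dist_sub_dist h.chord_subset hst
    simp only [gromovProduct]
    linarith
  · simp only [gromovProduct]
    ring

end GromovProducts

section Telescoping

theorem sum_Ico_sum_Ico_mixed_difference {G : Type*} [AddCommGroup G] (f : ℕ → ℕ → G)
    {a b c d : ℕ} (hab : a ≤ b) (hcd : c ≤ d) :
    ∑ k ∈ Finset.Ico a b, ∑ l ∈ Finset.Ico c d,
      (f k (l + 1) + f (k + 1) l - f k l - f (k + 1) (l + 1)) =
        f a d + f b c - f a c - f b d := by
  have inner (k : ℕ) : ∑ l ∈ Finset.Ico c d,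
      (f k (l + 1) + f (k + 1) l - f k l - f (k + 1) (l + 1)) =
        (f (k + 1) c - f (k + 1) d) - (f k c - f k d) := by
    calc _ = ∑ l ∈ Finset.Ico c d, ((f k (l + 1) - f (k + 1) (l + 1)) - (f k l - f (k + 1) l)) :=
          Finset.sum_congr rfl fun l _ ↦ by abel
      _ = _ := by rw [Finset.sum_Ico_sub (fun l ↦ f k l - f (k + 1) l) hcd]; abel
  rw [Finset.sum_congr rfl fun k _ ↦ inner k, Finset.sum_Ico_sub (fun k ↦ f k c - f k d) hab]
  abel

theorem sum_range_sum_range_eq_add_of_eq_zero {M : Type*} [AddCommMonoid M] {f : ℕ → ℕ → M}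
    {a b n : ℕ} (hbn : b ≤ n)
    (hf : ∀ k < n, ∀ l < n, ¬(k < a ∧ a ≤ l ∧ l < b) → ¬(a ≤ k ∧ k < b ∧ b ≤ l) → f k l = 0) :
    ∑ k ∈ Finset.range n, ∑ l ∈ Finset.range n, f k l =
      ∑ k ∈ Finset.Ico 0 a, ∑ l ∈ Finset.Ico a b, f k l +
        ∑ k ∈ Finset.Ico a b, ∑ l ∈ Finset.Ico b n, f k l := by
  simp only [← Finset.sum_product']
  rw [← Finset.sum_union
    (Finset.disjoint_product.2 (.inl (Finset.Ico_disjoint_Ico_consecutive 0 a b)))]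
  refine (Finset.sum_subset (fun x hx ↦ ?_) fun x hx hx' ↦ ?_).symm
  · simp only [Finset.mem_union, Finset.mem_product, Finset.mem_Ico, Finset.mem_range] at hx ⊢
    omega
  · simp only [Finset.mem_union, Finset.mem_product, Finset.mem_Ico, Finset.mem_range] at hx hx'
    exact hf x.1 hx.1 x.2 hx.2 (by omega) (by omega)

end Telescoping

section Coordinates

variable {S : Type*} [MetricSpace S] {K : Set S} {c d q q' w x y z : S} {p : ℕ → S}
  {a b i j k l m n : ℕ}

theorem Interlaced.union_inter_seg_nonempty (h : Interlaced K w x y z) (hq : q ∈ K) (hx : x ∈ K) :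
    ((seg w q ∪ seg q y) ∩ seg x z).Nonempty := by
  have hxz : seg x x ∪ seg x z = seg x z := by simp [left_mem_seg]
  exact hxz ▸ h q hq x hx

theorem Interlaced.seg_inter_seg_nonempty (h : Interlaced K w x y z) (hw : w ∈ K) (hx : x ∈ K) :
    (seg w y ∩ seg x z).Nonempty := by
  have hwy : seg w w ∪ seg w y = seg w y := by simp [left_mem_seg]
  exact hwy ▸ h.union_inter_seg_nonempty hw hx

/-- The point `q` lies strictly on that side of the chord `[p i, p j]` on which the points `p k`
with `i < k < j` are: it can be joined to one of them without meeting the chord. -/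
def OnInnerSide (p : ℕ → S) (i j : ℕ) (q : S) : Prop :=
  ∃ k ∈ Ioo i j, Disjoint (seg q (p k)) (seg (p i) (p j))

open Classical in
/-- The Gromov product of `p i` and `p j` seen from `q`, cut off to `0` on the outer side of the
chord `[p i, p j]`. -/
noncomputable def sideProduct (p : ℕ → S) (i j : ℕ) (q : S) : ℝ :=
  if OnInnerSide p i j q then gromovProduct q (p i) (p j) else 0

/-- The coordinates of the `l₁`-embedding: the mixed second differences of `sideProduct`. -/
noncomputable def coordinate (p : ℕ → S) (k l : ℕ) (q : S) : ℝ :=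
  sideProduct p k (l + 1) q + sideProduct p (k + 1) l q - sideProduct p k l q -
    sideProduct p (k + 1) (l + 1) q

theorem sideProduct_eq_gromovProduct (h : q ∉ seg (p i) (p j) →
    ∃ k ∈ Icc i j, Disjoint (seg q (p k)) (seg (p i) (p j))) :
    sideProduct p i j q = gromovProduct q (p i) (p j) := by
  classical
  refine ite_eq_left_iff.2 fun hside ↦ (gromovProduct_eq_zero ?_).symm
  by_contra hq
  obtain ⟨k, ⟨hik, hkj⟩, hk⟩ := h hq
  have hpk : p k ∉ seg (p i) (p j) := disjoint_left.1 hk (right_mem_seg _ _)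
  refine hside ⟨k, ⟨hik.lt_of_ne ?_, hkj.lt_of_ne ?_⟩, hk⟩ <;> rintro rfl
  · exact hpk (left_mem_seg _ _)
  · exact hpk (right_mem_seg _ _)

namespace IsInterlacedCycle

theorem seg_subset (h : IsInterlacedCycle K n p) (a b : ℕ) : seg (p a) (p b) ⊆ K :=
  h.convex _ (h.mem a) _ (h.mem b)

theorem seg_inter_seg_nonempty (h : IsInterlacedCycle K n p)
    (hai : a ≤ i) (hib : i ≤ b) (hbj : b ≤ j) (hjn : j ≤ n) :
    (seg (p a) (p b) ∩ seg (p i) (p j)).Nonempty :=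
  (h.interlaced hai hib hbj hjn).seg_inter_seg_nonempty (h.mem a) (h.mem i)

theorem not_onInnerSide (h : IsInterlacedCycle K n p)
    (hq : q ∈ K) (hj : j ≤ n) (hm : m ≤ n) (hmij : m ≤ i ∨ j ≤ m)
    (hvis : Disjoint (seg q (p m)) (seg (p i) (p j))) : ¬OnInnerSide p i j q := by
  rintro ⟨k, ⟨hik, hkj⟩, hk⟩
  have hblocked : ((seg (p m) q ∪ seg q (p k)) ∩ seg (p i) (p j)).Nonempty := by
    rcases hmij with hmi | hjm
    · exact (h.interlaced hmi hik.le hkj.le hj).union_inter_seg_nonempty hq (h.mem i)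
    · rw [seg_comm (p i)]
      exact (h.interlaced hik.le hkj.le hjm hm).reverse.union_inter_seg_nonempty hq (h.mem j)
  rw [seg_comm (p m)] at hblocked
  exact not_disjoint_iff_nonempty_inter.2 hblocked (disjoint_union_left.2 ⟨hvis, hk⟩)

theorem sideProduct_eq_zero (h : IsInterlacedCycle K n p)
    (hq : q ∈ K) (hj : j ≤ n) (hvis : q ∉ seg (p i) (p j) →
    ∃ m ≤ n, (m ≤ i ∨ j ≤ m) ∧ Disjoint (seg q (p m)) (seg (p i) (p j))) :
    sideProduct p i j q = 0 := by
  refine if_neg fun hside ↦ ?_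
  obtain ⟨k, -, hdisj⟩ := id hside
  obtain ⟨m, hm, hmij, hm'⟩ := hvis (disjoint_left.1 hdisj (left_mem_seg _ _))
  exact h.not_onInnerSide hq hj hm hmij hm' hside

end IsInterlacedCycle

variable [Fact (IsBusemannSpace S)]

theorem disjoint_seg_or_disjoint_seg (hq : q ∈ seg x y) (hqcd : q ∉ seg c d) :
    Disjoint (seg q x) (seg c d) ∨ Disjoint (seg q y) (seg c d) := by
  by_contra! hmeet
  simp only [not_disjoint_iff] at hmeet
  obtain ⟨⟨o, hoq, ho⟩, o', hoq', ho'⟩ := hmeet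
  exact hqcd (segConvex_seg c d _ ho _ ho' (mem_seg_left_of_mem_seg_right
    (mem_seg_right_of_mem_seg_left hq (mem_seg_symm hoq)) hoq'))

theorem le_of_monotone_comp_geo {f : S → ℝ} (hf : Monotone fun t ↦ f (geo x y t))
    (hw : w ∈ seg x y) (hz : z ∈ seg x w) : f z ≤ f w := by
  obtain ⟨s, -, rfl⟩ := (seg_eq_image_geo x y).subset (seg_subset_left hw hz)
  obtain ⟨t, -, rfl⟩ := (seg_eq_image_geo x y).subset hw
  rcases le_total s t with hst | hts
  · exact hf hst
  · have := mem_seg_right_of_mem_seg_left hz (geo_mem_seg_geo x y hts)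
    rw [seg_self] at this
    rw [this]

theorem sideProduct_eq_gromovProduct_of_mem_seg (hq : q ∈ seg (p a) (p b)) (hab : a ≤ b)
    (hia : i ≤ a) (hbj : b ≤ j) : sideProduct p i j q = gromovProduct q (p i) (p j) :=
  sideProduct_eq_gromovProduct fun hq' ↦ (disjoint_seg_or_disjoint_seg hq hq').elim
    (fun hvis ↦ ⟨a, ⟨hia, hab.trans hbj⟩, hvis⟩) fun hvis ↦ ⟨b, ⟨hia.trans hab, hbj⟩, hvis⟩

namespace IsInterlacedCycle

theorem sideProduct_eq_zero_of_mem_seg (h : IsInterlacedCycle K n p)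
    (hq : q ∈ seg (p a) (p b)) (han : a ≤ n) (hbn : b ≤ n)
    (hjn : j ≤ n) (ha : a ≤ i ∨ j ≤ a) (hb : b ≤ i ∨ j ≤ b) : sideProduct p i j q = 0 :=
  h.sideProduct_eq_zero (h.seg_subset a b hq) hjn fun hq' ↦
    (disjoint_seg_or_disjoint_seg hq hq').elim
      (fun hvis ↦ ⟨a, han, ha, hvis⟩) fun hvis ↦ ⟨b, hbn, hb, hvis⟩

theorem isSwitchedProduct_sideProduct (h : IsInterlacedCycle K n p)
    (han : a ≤ n) (hjn : j ≤ n) (ha : a ≤ i ∨ j ≤ a)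
    (hib : i ≤ b) (hbj : b ≤ j) :
    IsSwitchedProduct (p a) (p b) (p i) (p j) (sideProduct p i j) where
  eq_zero hz ho hoz := h.sideProduct_eq_zero (h.seg_subset a b hz) hjn fun hz' ↦
    (disjoint_seg_or_disjoint_seg hz hz').elim (fun hvis ↦ ⟨a, han, ha, hvis⟩)
      fun hvis ↦ (disjoint_left.1 hvis hoz ho).elim
  eq_gromovProduct hz ho hoz := sideProduct_eq_gromovProduct fun hz' ↦
    (disjoint_seg_or_disjoint_seg hz hz').elim
      (fun hvis ↦ (disjoint_left.1 hvis (mem_seg_symm hoz) ho).elim)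
      fun hvis ↦ ⟨b, ⟨hib, hbj⟩, hvis⟩

theorem monotone_coordinate_geo (h : IsInterlacedCycle K n p)
    (hak : a ≤ k) (hkb : k < b) (hbl : b ≤ l) (hln : l < n) :
    Monotone fun t ↦ coordinate p k l (geo (p a) (p b) t) := by
  have meet {i j : ℕ} (hai : a ≤ i) (hib : i ≤ b) (hbj : b ≤ j) (hjn : j ≤ n) :
      (seg (p i) (p j) ∩ seg (p a) (p b)).Nonempty :=
    inter_comm _ _ ▸ h.seg_inter_seg_nonempty hai hib hbj hjn
  have hexagon : IsInterlacedHexagon K (p a) (p k) (p (k + 1)) (p b) (p l) (p (l + 1)) := by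
    refine ⟨h.seg_subset a b, h.interlaced ?_ ?_ ?_ ?_, h.interlaced ?_ ?_ ?_ ?_,
      h.interlaced ?_ ?_ ?_ ?_, h.interlaced ?_ ?_ ?_ ?_, h.interlaced ?_ ?_ ?_ ?_,
      h.interlaced ?_ ?_ ?_ ?_, meet ?_ ?_ ?_ ?_, meet ?_ ?_ ?_ ?_, meet ?_ ?_ ?_ ?_,
      meet ?_ ?_ ?_ ?_⟩ <;> omega
  have switched {i j : ℕ} (hai : a ≤ i) (hib : i ≤ b) (hbj : b ≤ j) (hjn : j ≤ n) :
      IsSwitchedProduct (p a) (p b) (p i) (p j) (sideProduct p i j) :=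
    h.isSwitchedProduct_sideProduct (by omega) hjn (.inl hai) hib hbj
  refine hexagon.monotone_mixed_difference (switched ?_ ?_ ?_ ?_) (switched ?_ ?_ ?_ ?_)
    (switched ?_ ?_ ?_ ?_) (switched ?_ ?_ ?_ ?_) <;> omega

theorem monotone_coordinate_geo_reverse (h : IsInterlacedCycle K n p)
    (hka : k < a) (hal : a ≤ l) (hlb : l < b) (hbn : b ≤ n) :
    Monotone fun t ↦ coordinate p k l (geo (p b) (p a) t) := by
  have meet {i j : ℕ} (hia : i ≤ a) (haj : a ≤ j) (hjb : j ≤ b) :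
      (seg (p i) (p j) ∩ seg (p b) (p a)).Nonempty :=
    seg_comm (p a) (p b) ▸ h.seg_inter_seg_nonempty hia haj hjb hbn
  have hexagon : IsInterlacedHexagon K (p b) (p k) (p (k + 1)) (p a) (p l) (p (l + 1)) := by
    refine ⟨h.seg_subset b a, (h.interlaced (i := a) ?_ ?_ ?_ ?_).rotate.rotate.rotate,
      (h.interlaced (i := k) ?_ ?_ ?_ ?_).rotate.rotate.rotate, h.interlaced ?_ ?_ ?_ ?_,
      h.interlaced ?_ ?_ ?_ ?_, h.interlaced ?_ ?_ ?_ ?_, h.interlaced ?_ ?_ ?_ ?_, meet ?_ ?_ ?_,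
      meet ?_ ?_ ?_, meet ?_ ?_ ?_, meet ?_ ?_ ?_⟩ <;> omega
  have switched {i j : ℕ} (hia : i ≤ a) (haj : a ≤ j) (hjb : j ≤ b) :
      IsSwitchedProduct (p b) (p a) (p i) (p j) (sideProduct p i j) :=
    h.isSwitchedProduct_sideProduct hbn (by omega) (.inr hjb) hia haj
  refine hexagon.monotone_mixed_difference (switched ?_ ?_ ?_) (switched ?_ ?_ ?_)
    (switched ?_ ?_ ?_) (switched ?_ ?_ ?_) <;> omega

theorem coordinate_eq_coordinate (h : IsInterlacedCycle K n p)
    (hab : a ≤ b) (hbn : b ≤ n) (hq : q ∈ seg (p a) (p b))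
    (hq' : q' ∈ seg (p a) (p b)) (hln : l < n) (hfirst : ¬(k < a ∧ a ≤ l ∧ l < b))
    (hsecond : ¬(a ≤ k ∧ k < b ∧ b ≤ l)) : coordinate p k l q = coordinate p k l q' := by
  by_cases hkl : k < a ∧ b ≤ l
  · have eq_mixed_difference {z : S} (hz : z ∈ seg (p a) (p b)) : coordinate p k l z =
        (dist (p k) (p l) + dist (p (k + 1)) (p (l + 1)) - dist (p k) (p (l + 1)) -
          dist (p (k + 1)) (p l)) / 2 := by
      have inner {i j : ℕ} := sideProduct_eq_gromovProduct_of_mem_seg (i := i) (j := j) hz hab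
      rw [coordinate, inner, inner, inner, inner] <;> try omega
      simp only [gromovProduct]
      ring
    rw [eq_mixed_difference hq, eq_mixed_difference hq']
  · have eq_zero {z : S} (hz : z ∈ seg (p a) (p b)) : coordinate p k l z = 0 := by
      have outer {i j : ℕ} :=
        h.sideProduct_eq_zero_of_mem_seg (i := i) (j := j) hz (hab.trans hbn) hbn
      rw [coordinate, outer, outer, outer, outer] <;> try omega
      ring
    rw [eq_zero hq, eq_zero hq']

theorem sum_coordinate_eq_gromovProduct_zero (h : IsInterlacedCycle K n p)
    (hab : a ≤ b) (hbn : b ≤ n) (hq : q ∈ seg (p a) (p b)) :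
    ∑ k ∈ Finset.Ico 0 a, ∑ l ∈ Finset.Ico a b, coordinate p k l q =
      gromovProduct q (p 0) (p b) := by
  have outer {i j : ℕ} :=
    h.sideProduct_eq_zero_of_mem_seg (i := i) (j := j) hq (hab.trans hbn) hbn
  simp only [coordinate]
  rw [sum_Ico_sum_Ico_mixed_difference (sideProduct p · · q) a.zero_le hab,
    sideProduct_eq_gromovProduct_of_mem_seg hq hab a.zero_le le_rfl, outer, outer, outer] <;>
    try omega
  ring

theorem sum_coordinate_eq_gromovProduct_last (h : IsInterlacedCycle K n p)
    (hab : a ≤ b) (hbn : b ≤ n) (hq : q ∈ seg (p a) (p b)) :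
    ∑ k ∈ Finset.Ico a b, ∑ l ∈ Finset.Ico b n, coordinate p k l q =
      gromovProduct q (p a) (p n) := by
  have outer {i j : ℕ} :=
    h.sideProduct_eq_zero_of_mem_seg (i := i) (j := j) hq (hab.trans hbn) hbn
  simp only [coordinate]
  rw [sum_Ico_sum_Ico_mixed_difference (sideProduct p · · q) hab hbn,
    sideProduct_eq_gromovProduct_of_mem_seg hq hab le_rfl hbn, outer, outer, outer] <;>
    try omega
  ring

theorem sum_abs_coordinate_sub_of_mem_seg (h : IsInterlacedCycle K n p) (hab : a ≤ b) (hbn : b ≤ n)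
    (hq' : q' ∈ seg (p a) (p b)) (hqq' : q ∈ seg (p a) q') :
    ∑ k ∈ Finset.range n, ∑ l ∈ Finset.range n, |coordinate p k l q - coordinate p k l q'| =
      dist q q' := by
  have hq : q ∈ seg (p a) (p b) := seg_subset_left hq' hqq'
  have hq'q : q' ∈ seg q (p b) := mem_seg_right_of_mem_seg_left hq' hqq'
  rw [sum_range_sum_range_eq_add_of_eq_zero hbn fun k _ l hl hfirst hsecond ↦ by
    rw [h.coordinate_eq_coordinate hab hbn hq hq' hl hfirst hsecond, sub_self, abs_zero]]
  have first : ∑ k ∈ Finset.Ico 0 a, ∑ l ∈ Finset.Ico a b,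
      |coordinate p k l q - coordinate p k l q'| =
        gromovProduct q (p 0) (p b) - gromovProduct q' (p 0) (p b) := by
    simp only [← h.sum_coordinate_eq_gromovProduct_zero hab hbn, hq, hq',
      ← Finset.sum_sub_distrib]
    refine Finset.sum_congr rfl fun k hk ↦ Finset.sum_congr rfl fun l hl ↦ ?_
    obtain ⟨hal, hlb⟩ := Finset.mem_Ico.1 hl
    exact abs_of_nonneg (sub_nonneg.2 (le_of_monotone_comp_geo
      (h.monotone_coordinate_geo_reverse (Finset.mem_Ico.1 hk).2 hal hlb hbn)
      (mem_seg_symm hq) (mem_seg_symm hq'q)))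
  have second : ∑ k ∈ Finset.Ico a b, ∑ l ∈ Finset.Ico b n,
      |coordinate p k l q - coordinate p k l q'| =
        gromovProduct q' (p a) (p n) - gromovProduct q (p a) (p n) := by
    simp only [← h.sum_coordinate_eq_gromovProduct_last hab hbn, hq, hq',
      ← Finset.sum_sub_distrib]
    refine Finset.sum_congr rfl fun k hk ↦ Finset.sum_congr rfl fun l hl ↦ ?_
    obtain ⟨hak, hkb⟩ := Finset.mem_Ico.1 hk
    obtain ⟨hbl, hln⟩ := Finset.mem_Ico.1 hl
    rw [abs_sub_comm]
    exact abs_of_nonneg (sub_nonneg.2 (le_of_monotone_comp_geo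
      (h.monotone_coordinate_geo hak hkb hbl hln) hq' hqq'))
  rw [first, second, h.closed]
  simp only [gromovProduct]
  linarith [mem_seg.1 hqq', mem_seg.1 hq'q, dist_comm q (p a), dist_comm q' (p a)]

theorem sum_abs_coordinate_sub (h : IsInterlacedCycle K n p)
    (hab : a ≤ b) (hbn : b ≤ n) (hq : q ∈ seg (p a) (p b))
    (hq' : q' ∈ seg (p a) (p b)) :
    ∑ k ∈ Finset.range n, ∑ l ∈ Finset.range n, |coordinate p k l q - coordinate p k l q'| =
      dist q q' := by
  rcases le_total (dist (p a) q) (dist (p a) q') with hle | hle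
  · exact h.sum_abs_coordinate_sub_of_mem_seg hab hbn hq' (mem_seg_of_dist_le hq hq' hle)
  · simp only [abs_sub_comm (coordinate p _ _ q), dist_comm q]
    exact h.sum_abs_coordinate_sub_of_mem_seg hab hbn hq (mem_seg_of_dist_le hq' hq hle)

end IsInterlacedCycle

end Coordinates

end BusemannSurface

/-- any finite subset of a Busemann surface is `l₁`-embeddable. -/
theorem busemann_surface_finite_l1_embeddable {S : Type*} [MetricSpace S]
    (hS : IsBusemannSurface S)
    (Q : Set S) (hQfin : Q.Finite) :
    ∃ (N : ℕ) (φ : S → Fin N → ℝ),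
      ∀ x ∈ Q, ∀ y ∈ Q, (∑ i : Fin N, |φ x i - φ y i|) = dist x y := by
  obtain ⟨hB, ⟨e⟩⟩ := hS
  have : Fact (IsBusemannSpace S) := ⟨hB⟩
  rcases Q.eq_empty_or_nonempty with rfl | hQ
  · exact ⟨0, fun _ _ ↦ 0, by simp⟩
  obtain ⟨K, n, p, hp, hchord⟩ := BusemannSurface.exists_isInterlacedCycle
    (e.trans Complex.equivRealProdCLM.symm.toHomeomorph) hQfin hQ
  refine ⟨n * n, fun x i ↦ BusemannSurface.coordinate p (finProdFinEquiv.symm i).1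
    (finProdFinEquiv.symm i).2 x, fun x hx y hy ↦ ?_⟩
  rcases eq_or_ne x y with rfl | hxy
  · simp
  obtain ⟨a, b, hab, hbn, hxab, hyab⟩ := hchord x hx y hy hxy
  rw [← hp.sum_abs_coordinate_sub hab.le hbn.le hxab hyab, Equiv.sum_comp finProdFinEquiv.symm
    fun i : Fin n × Fin n ↦ |BusemannSurface.coordinate p i.1 i.2 x -
      BusemannSurface.coordinate p i.1 i.2 y|, Fintype.sum_prod_type]
  simp only [Finset.sum_range]
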